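/- Let n ≥ 4, let a be a semi-integer (2a ∈ ℤ, a ≠ 0), let q = n(n−1)/2, and set β = max{−2a+2, 2n} if a < 0 and β = max{2a, 2n} if a > 0. Then there exists a proper real algebraic subset B ⊊ ℝ^n such that for every mass vector m = (m_1, …, m_n) ∈ ℝ^n \ B with all m_i > 0, the number of (n−2)-dimensional central configurations with masses m for the potential U_a up to symmetry — equivalently, the number of mutual-distance vectors (r_{ij}) ∈ ℝ^q of (n−2)-dimensional central configurations with masses m, exponent a, and multiplier normalized by λ = M — is at most β(2β−1)^{q+n}. -/

import Mathlib

/-- The dimension of a configuration: the dimension of the smallest affine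
subspace containing the points. -/
noncomputable def confDim {d n : ℕ} (x : Fin n → EuclideanSpace ℝ (Fin d)) : ℕ :=
  Module.finrank ℝ (affineSpan ℝ (Set.range x)).direction

/-- `x` is a central configuration for the potential `U_a` (with `c2 = 2a ∈ ℤ`),
masses `m`, and multiplier `lam`. -/
def IsCentralConfig {d n : ℕ} (c2 : ℤ) (m : Fin n → ℝ) (lam : ℝ)
    (x : Fin n → EuclideanSpace ℝ (Fin d)) : Prop :=
  ∀ j : Fin n,
    (∑ i ∈ Finset.univ \ {j}, (m i * dist (x i) (x j) ^ c2) • (x i - x j))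
      + lam • (x j - (∑ i, m i)⁻¹ • ∑ i, m i • x i) = 0

/-- Index type for the mutual-distance coordinates `r_{ij}`, `1 ≤ i < j ≤ n`. -/
abbrev PairIdx (n : ℕ) := {p : Fin n × Fin n // p.1 < p.2}

/-- The set of mutual-distance vectors of `(n−2)`-dimensional central configurations
with masses `m`, exponent `2a = c2`, and multiplier normalized by `λ = M`. -/
def ccDistSet (n : ℕ) (c2 : ℤ) (m : Fin n → ℝ) : Set (PairIdx n → ℝ) :=
  {rv | ∃ x : Fin n → EuclideanSpace ℝ (Fin (n - 2)),
    Function.Injective x ∧ IsCentralConfig c2 m (∑ i, m i) x ∧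
    confDim x = n - 2 ∧ ∀ p : PairIdx n, rv p = dist (x p.1.1) (x p.1.2)}

/-- `β = max{−2a+2, 2n}` if `a < 0` and `β = max{2a, 2n}` if `a > 0` (with `c2 = 2a`). -/
def betaBound (n : ℕ) (c2 : ℤ) : ℕ :=
  if c2 < 0 then max (2 - c2).toNat (2 * n) else max c2.toNat (2 * n)

/-!
The affine relation `v` of a configuration of dimension `n - 2` is unique up to scaling, and the
equations of central configurations then read `r_ij ^ (2a) = 1 + κ * z_i * z_j` with
`z_i = v_i / m_i` (Dziobek). After rescaling, `κ` is a sign. For a fixed sign and a fixed support of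
`z`, the distances are thus functions of the `z_i`, subject to one equation: the Cayley–Menger
determinant vanishes. On this hypersurface the columns of the adjugate of the Cayley–Menger matrix
are proportional to `v`, so that `n + 1` parameters, namely the `z_i` in the support, the masses
outside and a factor of proportionality, determine all masses.

It remains to bound the generic fibre of the map `m` from a hypersurface `F = 0` in the space of
parameters to the space of masses. If it had more than `s` points, there would be `s + 1` functions
`v i` which are independent over the polynomials in the masses modulo `F`. The products
`F ^ γ * m ^ α * v i` would then be linearly independent over the scalars, and for large exponents
there are too many of them for the space of polynomials of their degree. Summing over the signs and
the supports yields the bound.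
-/

/-- The span of the monomials in the family `g` whose exponent of `g t` is at most `A t`, for
every `t`. Its dimension bounds how many independent elements one can produce from `g` under
control of the degree in each generator separately. -/
def monomialBox (k : Type*) {τ R : Type*} [Fintype τ] [Field k] [CommRing R] [Algebra k R]
    (g : τ → R) (A : τ → ℕ) : Submodule k R :=
  Submodule.span k ((fun f : τ → ℕ ↦ ∏ t, g t ^ f t) '' Set.Iic A)

section MonomialBox

variable {k τ π R : Type*} [Fintype τ] [Fintype π] [Field k] [CommRing R] [Algebra k R]
  {g : τ → R} {ρ : π → R} {A B : τ → ℕ}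

lemma prod_pow_mem_monomialBox {f : τ → ℕ} (hf : f ≤ A) : ∏ t, g t ^ f t ∈ monomialBox k g A :=
  Submodule.subset_span ⟨f, hf, rfl⟩

lemma monomialBox_mono (h : A ≤ B) : monomialBox k g A ≤ monomialBox k g B :=
  Submodule.span_mono <| Set.image_mono <| Set.Iic_subset_Iic.2 h

lemma one_mem_monomialBox : (1 : R) ∈ monomialBox k g A := by
  simpa using prod_pow_mem_monomialBox (k := k) (g := g) (A := A) (f := 0) zero_le

lemma algebraMap_mem_monomialBox (c : k) : algebraMap k R c ∈ monomialBox k g A := by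
  rw [Algebra.algebraMap_eq_smul_one]
  exact Submodule.smul_mem _ _ one_mem_monomialBox

lemma self_mem_monomialBox {t : τ} (ht : 1 ≤ A t) : g t ∈ monomialBox k g A := by
  classical
  have h := prod_pow_mem_monomialBox (k := k) (g := g) (f := Pi.single t 1) (A := A)
    (fun t' ↦ by rcases eq_or_ne t' t with rfl | h <;> simp [*])
  simpa [Pi.single_apply, pow_ite] using h

lemma mul_mem_monomialBox {x y : R} (hx : x ∈ monomialBox k g A) (hy : y ∈ monomialBox k g B) :
    x * y ∈ monomialBox k g (A + B) := by
  have h := Submodule.mul_mem_mul hx hy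
  rw [monomialBox, monomialBox, Submodule.span_mul_span] at h
  refine Submodule.span_mono ?_ h
  rintro _ ⟨_, ⟨f, hf, rfl⟩, _, ⟨f', hf', rfl⟩, rfl⟩
  exact ⟨f + f', add_le_add (Set.mem_Iic.1 hf) hf', by simp [pow_add, Finset.prod_mul_distrib]⟩

lemma pow_mem_monomialBox {x : R} (hx : x ∈ monomialBox k g A) (N : ℕ) :
    x ^ N ∈ monomialBox k g (N • A) := by
  induction N with
  | zero => simpa using one_mem_monomialBox
  | succ N ih => rw [pow_succ, succ_nsmul]; exact mul_mem_monomialBox ih hx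

lemma prod_mem_monomialBox {ι : Type*} {s : Finset ι} {C : ι → τ → ℕ} {x : ι → R}
    (hx : ∀ i ∈ s, x i ∈ monomialBox k g (C i)) :
    ∏ i ∈ s, x i ∈ monomialBox k g (∑ i ∈ s, C i) := by
  classical
  induction s using Finset.induction_on with
  | empty => simpa using one_mem_monomialBox
  | insert a s ha ih =>
    rw [Finset.prod_insert ha, Finset.sum_insert ha]
    exact mul_mem_monomialBox (hx a (Finset.mem_insert_self _ _))
      (ih fun i hi ↦ hx i (Finset.mem_insert_of_mem hi))

instance finiteDimensional_monomialBox : FiniteDimensional k (monomialBox k g A) := by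
  classical
  exact FiniteDimensional.span_of_finite k ((Set.finite_Iic A).image _)

lemma finrank_monomialBox_le : Module.finrank k (monomialBox k g A) ≤ ∏ t, (A t + 1) := by
  classical
  have himage : ((fun f : τ → ℕ ↦ ∏ t, g t ^ f t) '' Set.Iic A)
      = (((Finset.Iic A).image fun f : τ → ℕ ↦ ∏ t, g t ^ f t : Finset R) : Set R) := by
    simp
  calc Module.finrank k (monomialBox k g A)
      ≤ ((Finset.Iic A).image fun f : τ → ℕ ↦ ∏ t, g t ^ f t).card := by
        rw [monomialBox, himage]
        exact finrank_span_finset_le_card _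
    _ ≤ (Finset.Iic A).card := Finset.card_image_le
    _ = ∏ t, (A t + 1) := by simp [Pi.card_Iic]

lemma monomialBox_le_sumElim_left :
    monomialBox k g A ≤ monomialBox k (Sum.elim g ρ) (Sum.elim A 0) := by
  rw [monomialBox, Submodule.span_le]
  rintro _ ⟨f, hf, rfl⟩
  have h := prod_pow_mem_monomialBox (k := k) (g := Sum.elim g ρ) (f := Sum.elim f 0)
    (A := Sum.elim A 0) (Sum.elim_le_elim_iff.2 ⟨hf, le_rfl⟩)
  simpa using h

lemma monomialBox_le_sumElim_right {C : π → ℕ} :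
    monomialBox k ρ C ≤ monomialBox k (Sum.elim g ρ) (Sum.elim 0 C) := by
  rw [monomialBox, Submodule.span_le]
  rintro _ ⟨f, hf, rfl⟩
  have h := prod_pow_mem_monomialBox (k := k) (g := Sum.elim g ρ) (f := Sum.elim 0 f)
    (A := Sum.elim 0 C) (Sum.elim_le_elim_iff.2 ⟨le_rfl, hf⟩)
  simpa using h

/-- Divide the exponent of each `ρ p` by `e` and trade `ρ p ^ e` for a polynomial in `g`. -/
lemma monomialBox_sumElim_le_of_pow_mem {e : ℕ} (he : 0 < e) {D : π → τ → ℕ}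
    (hρ : ∀ p, ρ p ^ e ∈ monomialBox k g (D p)) (B : τ → ℕ) (C : π → ℕ) :
    monomialBox k (Sum.elim g ρ) (Sum.elim B C) ≤
      monomialBox k (Sum.elim g ρ) (Sum.elim (B + ∑ p, (C p / e) • D p) fun _ ↦ e - 1) := by
  rw [monomialBox, Submodule.span_le]
  rintro _ ⟨f, hf, rfl⟩
  have hB (t : τ) : f (.inl t) ≤ B t := hf (.inl t)
  have hC (p : π) : f (.inr p) ≤ C p := hf (.inr p)
  have hdivMod : ∏ t, Sum.elim g ρ t ^ f t =
      ((∏ t, g t ^ f (.inl t)) * ∏ p, (ρ p ^ e) ^ (f (.inr p) / e)) *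
        ∏ p, ρ p ^ (f (.inr p) % e) := by
    simp only [Fintype.prod_sum_type, Sum.elim_inl, Sum.elim_inr, ← pow_mul, mul_assoc,
      ← Finset.prod_mul_distrib, ← pow_add, Nat.div_add_mod]
  have hquot : (∏ t, g t ^ f (.inl t)) * ∏ p, (ρ p ^ e) ^ (f (.inr p) / e) ∈
      monomialBox k g (B + ∑ p, (C p / e) • D p) := by
    refine monomialBox_mono (add_le_add hB (Finset.sum_le_sum fun p _ ↦ ?_))
      (mul_mem_monomialBox (prod_pow_mem_monomialBox le_rfl)
        (prod_mem_monomialBox fun p _ ↦ pow_mem_monomialBox (hρ p) _))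
    exact nsmul_le_nsmul_left zero_le (Nat.div_le_div_right (hC p))
  have hrem : ∏ p, ρ p ^ (f (.inr p) % e) ∈ monomialBox k ρ fun _ ↦ e - 1 :=
    prod_pow_mem_monomialBox fun p ↦ Nat.le_sub_one_of_lt (Nat.mod_lt _ he)
  have h := mul_mem_monomialBox (monomialBox_le_sumElim_left (ρ := ρ) hquot)
    (monomialBox_le_sumElim_right (g := g) hrem)
  rwa [← hdivMod, ← Sum.elim_add_add, add_zero, zero_add] at h

lemma det_mem_monomialBox {ι : Type*} [Fintype ι] [DecidableEq ι] {M : Matrix ι ι R}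
    {C : ι → τ → ℕ} (hM : ∀ i j, M i j ∈ monomialBox k g (C j)) :
    M.det ∈ monomialBox k g (∑ j, C j) := by
  rw [Matrix.det_apply']
  refine Submodule.sum_mem _ fun σ _ ↦ ?_
  rw [← zsmul_eq_mul]
  exact zsmul_mem (prod_mem_monomialBox fun j _ ↦ hM (σ j) j) _

end MonomialBox

section Independence

variable {k R ι : Type*}

/-- Reduce a relation modulo `F` to kill the coefficients of `F ^ 0`, then cancel `F`. -/
lemma linearIndependent_pow_mul [CommRing k] [CommRing R] [Algebra k R] [Finite ι] {F : R}
    (hF : F ∈ nonZeroDivisors R) {x : ι → R}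
    (hx : LinearIndependent k fun i ↦ Ideal.Quotient.mk (Ideal.span {F}) (x i)) (N : ℕ) :
    LinearIndependent k fun p : Fin N × ι ↦ F ^ (p.1 : ℕ) * x p.2 := by
  have := Fintype.ofFinite ι
  induction N with
  | zero => exact linearIndependent_empty_type
  | succ N ih =>
    rw [Fintype.linearIndependent_iff] at hx ih ⊢
    intro a ha
    set y := ∑ p : Fin N × ι, a (p.1.succ, p.2) • (F ^ (p.1 : ℕ) * x p.2) with hy
    have hsplit : ∑ i, a (0, i) • x i + F * y = 0 := by
      rw [← ha, Fintype.sum_prod_type, Fin.sum_univ_succ, hy, Fintype.sum_prod_type]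
      simp_rw [Fin.val_zero, Fin.val_succ, pow_zero, one_mul, Finset.mul_sum, mul_smul_comm,
        pow_succ', mul_assoc]
    have hzero : ∀ i, a (0, i) = 0 := by
      refine hx (fun i ↦ a (0, i)) ?_
      have hmem : ∑ i, a (0, i) • x i ∈ Ideal.span {F} :=
        Ideal.mem_span_singleton'.2 ⟨-y, by linear_combination -hsplit⟩
      rwa [← Ideal.Quotient.eq_zero_iff_mem, map_sum] at hmem
    have hFy : F * y = 0 := by simpa [hzero] using hsplit
    have hsucc := ih (fun p ↦ a (p.1.succ, p.2))
      ((mul_left_mem_nonZeroDivisors_eq_zero_iff hF).1 hFy)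
    rintro ⟨γ, i⟩
    cases γ using Fin.cases with
    | zero => exact hzero i
    | succ γ => exact hsucc (γ, i)

lemma card_mul_pow_le_finrank [Field k] [CommRing R] [Algebra k R] [Fintype ι] {σ : Type*}
    [Fintype σ] [Algebra (MvPolynomial σ k) R] [IsScalarTower k (MvPolynomial σ k) R] {F : R}
    (hF : F ∈ nonZeroDivisors R) {x : ι → R}
    (hx : LinearIndependent (MvPolynomial σ k) fun i ↦
      Ideal.Quotient.mk (Ideal.span {F}) (x i))
    {N : ℕ} {W : Submodule k R} [FiniteDimensional k W]
    (hW : ∀ (γ : Fin N) (α : σ → Fin N) (i : ι), F ^ (γ : ℕ) *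
      ((∏ j, algebraMap (MvPolynomial σ k) R (.X j) ^ (α j : ℕ)) * x i) ∈ W) :
    Fintype.card ι * N ^ (Fintype.card σ + 1) ≤ Module.finrank k W := by
  classical
  have hmonomials : LinearIndependent k fun α : σ → Fin N ↦
      (∏ j, .X j ^ (α j : ℕ) : MvPolynomial σ k) := by
    have hinj : Function.Injective fun α : σ → Fin N ↦
        Finsupp.equivFunOnFinite.symm fun j ↦ (α j : ℕ) := fun α β h ↦
      funext fun j ↦ Fin.ext <| congrFun (Finsupp.equivFunOnFinite.symm.injective h) j
    have hbasis := (MvPolynomial.basisMonomials σ k).linearIndependent.comp _ hinj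
    simpa [Function.comp_def, MvPolynomial.monomial_eq, Finsupp.prod_fintype] using hbasis
  have hquot : LinearIndependent k fun p : (σ → Fin N) × ι ↦ Ideal.Quotient.mk (Ideal.span {F})
      ((∏ j, algebraMap (MvPolynomial σ k) R (.X j) ^ (p.1 j : ℕ)) * x p.2) := by
    convert linearIndependent_smul hmonomials hx using 2 with p
    rw [← Ideal.Quotient.mkₐ_eq_mk (MvPolynomial σ k), ← map_smul, Algebra.smul_def]
    simp only [map_prod, map_pow]
  have hli : LinearIndependent k fun p : Fin N × (σ → Fin N) × ι ↦
      (⟨_, hW p.1 p.2.1 p.2.2⟩ : W) :=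
    .of_comp W.subtype (linearIndependent_pow_mul hF hquot N)
  calc Fintype.card ι * N ^ (Fintype.card σ + 1)
      = Fintype.card (Fin N × (σ → Fin N) × ι) := by
        simp only [Fintype.card_prod, Fintype.card_fun, Fintype.card_fin]; ring
    _ ≤ Module.finrank k W := hli.fintype_card_le_finrank

end Independence

section Fibres

variable {k Q τ : Type*} [Field k] [CommRing Q] [Algebra k Q] [Fintype τ] {g : τ → Q}

/-- Lagrange interpolation. -/
lemma exists_mem_monomialBox_eq_single {ι : Type*} [Fintype ι] [DecidableEq ι] {s : ℕ}
    (hs : Fintype.card ι ≤ s + 1) {φ : ι → Q →ₐ[k] k}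
    (hφ : Function.Injective fun i t ↦ φ i (g t)) (i : ι) :
    ∃ f ∈ monomialBox k g fun _ ↦ s, (fun j ↦ φ j f) = Pi.single i 1 := by
  have hsep (j : ι) (hj : j ≠ i) :
      ∃ f ∈ monomialBox k g fun _ ↦ 1, φ i f = 1 ∧ φ j f = 0 := by
    obtain ⟨t, ht⟩ := Function.ne_iff.1 (hφ.ne hj)
    refine ⟨(φ i (g t) - φ j (g t))⁻¹ • (g t - algebraMap k Q (φ j (g t))),
      Submodule.smul_mem _ _ (sub_mem (self_mem_monomialBox le_rfl)
        (algebraMap_mem_monomialBox _)), ?_, ?_⟩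
    · simp [inv_mul_cancel₀ (sub_ne_zero.2 ht.symm)]
    · simp
  choose! f hfmem hfi hfj using hsep
  refine ⟨∏ j ∈ Finset.univ.erase i, f j, ?_, funext fun j ↦ ?_⟩
  · refine monomialBox_mono (fun t ↦ ?_)
      (prod_mem_monomialBox fun j hj ↦ hfmem j (Finset.ne_of_mem_erase hj))
    have hcard := Finset.card_erase_of_mem (Finset.mem_univ i)
    rw [Finset.card_univ] at hcard
    simp only [Finset.sum_apply, Finset.sum_const, smul_eq_mul, mul_one]
    omega
  · rw [map_prod]
    rcases eq_or_ne j i with rfl | hj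
    · rw [Pi.single_eq_same]
      exact Finset.prod_eq_one fun l hl ↦ hfi l (Finset.ne_of_mem_erase hl)
    · rw [Pi.single_eq_of_ne hj]
      exact Finset.prod_eq_zero (Finset.mem_erase.2 ⟨hj, Finset.mem_univ j⟩) (hfj j hj)

lemma map_monomialBox_pi_eq_top {ι : Type*} [Fintype ι] {s : ℕ} (hs : Fintype.card ι ≤ s + 1)
    {φ : ι → Q →ₐ[k] k} (hφ : Function.Injective fun i t ↦ φ i (g t)) :
    (monomialBox k g fun _ ↦ s).map (LinearMap.pi fun i ↦ (φ i).toLinearMap) = ⊤ := by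
  classical
  rw [eq_top_iff, ← (Pi.basisFun k ι).span_eq, Submodule.span_le]
  rintro _ ⟨i, rfl⟩
  obtain ⟨f, hf, hsingle⟩ := exists_mem_monomialBox_eq_single hs hφ i
  exact ⟨f, hf, by rw [Pi.basisFun_apply, ← hsingle]; rfl⟩

lemma exists_injective_fin_of_lt_encard {α : Type*} {S : Set α} {s : ℕ} (h : s < S.encard) :
    ∃ v : Fin (s + 1) → α, Function.Injective v ∧ ∀ i, v i ∈ S := by
  obtain ⟨T, hT, hTcard⟩ := Set.exists_subset_encard_eq (Order.add_one_le_of_lt h)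
  have hcard : Nat.card T = s + 1 := by
    rw [Nat.card_coe_set_eq, Set.ncard_def, hTcard]
    rfl
  have : Finite T := Nat.finite_of_card_ne_zero (by omega)
  let e := (Finite.equivFinOfCardEq hcard).symm
  exact ⟨fun i ↦ e i, Subtype.val_injective.comp e.injective, fun i ↦ hT (e i).2⟩

lemma exists_smul_mem_span_of_not_linearIndependent {K M : Type*} [CommRing K] [IsDomain K]
    [AddCommGroup M] [Module K M] {T : Set M} (hT : T.Finite) {s : ℕ}
    (hs : ∀ v : Fin (s + 1) → M, (∀ i, v i ∈ T) → ¬ LinearIndependent K v) :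
    ∃ I : Set M, I.encard ≤ s ∧ ∃ h : K, h ≠ 0 ∧ ∀ x ∈ T, h • x ∈ Submodule.span K I := by
  have := hT.fintype
  obtain ⟨J, hJ, hmax⟩ := exists_maximal_linearIndepOn K (Subtype.val : T → M)
  have hcard : (Subtype.val '' J).encard ≤ s := by
    by_contra! hlt
    obtain ⟨v, hv, hvJ⟩ := exists_injective_fin_of_lt_encard hlt
    refine hs v (fun i ↦ Subtype.coe_image_subset T J (hvJ i)) ?_
    exact LinearIndependent.comp hJ.id_image (fun i ↦ ⟨v i, hvJ i⟩)
      fun i j h ↦ hv (congrArg Subtype.val h)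
  have hsmul (x : T) : ∃ a : K, a ≠ 0 ∧ a • (x : M) ∈ Submodule.span K (Subtype.val '' J) := by
    by_cases hx : x ∈ J
    · exact ⟨1, one_ne_zero, by simpa using Submodule.subset_span (Set.mem_image_of_mem _ hx)⟩
    · exact hmax x hx
  choose a ha hmem using hsmul
  refine ⟨_, hcard, ∏ x, a x, Finset.prod_ne_zero_iff.2 fun x _ ↦ ha x, fun x hx ↦ ?_⟩
  classical
  rw [← Finset.prod_erase_mul _ _ (Finset.mem_univ (⟨x, hx⟩ : T)), mul_smul]
  exact Submodule.smul_mem _ _ (hmem ⟨x, hx⟩)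

/-- The evaluation map of the points `Φ` sends the box onto `Φ → k`, and after inverting `h` the
image of the box is spanned by at most `s` vectors. -/
lemma exists_ne_zero_encard_algHom_le {K : Type*} [CommRing K] [IsDomain K] [Algebra K Q] {s : ℕ}
    (hs : ∀ v : Fin (s + 1) → Q, (∀ i, v i ∈ monomialBox k g fun _ ↦ s) →
      ¬ LinearIndependent K v) :
    ∃ h : K, h ≠ 0 ∧ ∀ ψ : K →+* k, ψ h ≠ 0 → ∀ Φ : Set (Q →ₐ[k] k),
      (∀ φ ∈ Φ, ∀ a, φ (algebraMap K Q a) = ψ a) → Φ.InjOn (fun φ t ↦ φ (g t)) →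
      Φ.encard ≤ s := by
  classical
  obtain ⟨I, hIcard, h, hh, hspan⟩ := exists_smul_mem_span_of_not_linearIndependent
    (K := K) ((Set.finite_Iic fun _ : τ ↦ s).image fun f ↦ ∏ t, g t ^ f t)
    fun v hv ↦ hs v fun i ↦ Submodule.subset_span (hv i)
  refine ⟨h, hh, fun ψ hψ Φ hΦψ hΦ ↦ ?_⟩
  by_contra! hlt
  obtain ⟨φ, hφ, hφΦ⟩ := exists_injective_fin_of_lt_encard hlt
  let ev : Q →ₗ[k] (Fin (s + 1) → k) := LinearMap.pi fun i ↦ (φ i).toLinearMap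
  have hev (a : K) (y : Q) : ev (a • y) = ψ a • ev y := funext fun i ↦ by
    simp [ev, Algebra.smul_def, hΦψ (φ i) (hφΦ i)]
  let W : Submodule k (Fin (s + 1) → k) := Submodule.span k (ev '' I)
  have hevspan : ∀ y ∈ Submodule.span K I, ev y ∈ W := fun y hy ↦ by
    induction hy using Submodule.span_induction with
    | mem y hy => exact Submodule.subset_span ⟨y, hy, rfl⟩
    | zero => simp
    | add y z _ _ hy hz => rw [map_add]; exact add_mem hy hz
    | smul a y _ hy => rw [hev]; exact W.smul_mem _ hy
  have hW : W = ⊤ := by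
    rw [eq_top_iff, ← map_monomialBox_pi_eq_top (Fintype.card_fin _).le
      fun i j h ↦ hφ (hΦ (hφΦ i) (hφΦ j) h), Submodule.map_le_iff_le_comap, monomialBox,
      Submodule.span_le]
    intro y hy
    have := hevspan _ (hspan y hy)
    rwa [hev, Submodule.smul_mem_iff _ hψ] at this
  have hfinrank : Module.finrank k W ≤ s := by
    obtain ⟨hfin, hncard⟩ :=
      Set.encard_le_coe_iff_finite_ncard_le.1 ((Set.encard_image_le ev I).trans hIcard)
    have := hfin.fintype
    rw [Set.ncard_eq_toFinset_card'] at hncard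
    exact (finrank_span_le_card _).trans hncard
  rw [hW, finrank_top, Module.finrank_fin_fun] at hfinrank
  omega

end Fibres

section Bezout

open MvPolynomial (X aeval)

variable {k R Q σ τ π : Type*} [Field k] [CommRing R] [Algebra k R] [CommRing Q] [Algebra k Q]
  [Fintype σ] [Fintype τ] [Fintype π] {g : τ → R} {ρ : π → R}

lemma map_monomialBox (f : R →ₐ[k] Q) (A : τ → ℕ) :
    (monomialBox k g A).map f.toLinearMap = monomialBox k (f ∘ g) A := by
  rw [monomialBox, monomialBox, Submodule.map_span, ← Set.image_comp]
  simp only [Function.comp_def, AlgHom.toLinearMap_apply, map_prod, map_pow]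

lemma finrank_monomialBox_sumElim_le {e : ℕ} (he : 0 < e) {D : π → τ → ℕ}
    (hρ : ∀ p, ρ p ^ e ∈ monomialBox k g (D p)) (B : τ → ℕ) (C : π → ℕ) :
    Module.finrank k (monomialBox k (Sum.elim g ρ) (Sum.elim B C)) ≤
      (∏ t, (B t + ∑ p, C p / e * D p t + 1)) * e ^ Fintype.card π := by
  refine (Submodule.finrank_mono (monomialBox_sumElim_le_of_pow_mem he hρ B C)).trans
    (finrank_monomialBox_le.trans_eq ?_)
  simp [Fintype.prod_sum_type, Nat.sub_add_cancel he]

lemma pow_mul_prod_pow_mul_mem_monomialBox {F x : R} {m : σ → R} {A₀ E : τ → ℕ}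
    {A : σ → τ → ℕ} (hF : F ∈ monomialBox k g A₀) (hm : ∀ j, m j ∈ monomialBox k g (A j))
    (hx : x ∈ monomialBox k g E) {N γ : ℕ} (hγ : γ ≤ N) {α : σ → ℕ} (hα : ∀ j, α j ≤ N) :
    F ^ γ * ((∏ j, m j ^ α j) * x) ∈ monomialBox k g (N • (A₀ + ∑ j, A j) + E) := by
  refine monomialBox_mono ?_ (mul_mem_monomialBox (pow_mem_monomialBox hF γ)
    (mul_mem_monomialBox (prod_mem_monomialBox fun j _ ↦ pow_mem_monomialBox (hm j) (α j)) hx))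
  rw [← add_assoc, smul_add, Finset.smul_sum]
  gcongr with j
  exact hα j

/-- Both sides are polynomials in `t` of degree `card τ`, and the right one has the larger leading
coefficient. -/
lemma exists_pos_prod_mul_lt (D C : τ → ℕ) (K : ℕ) :
    ∃ t : ℕ, 0 < t ∧
      (∏ i, (D i * t + C i)) * K < ((∏ i, D i) * K + 1) * t ^ Fintype.card τ := by
  have hlim : Filter.Tendsto (fun t : ℕ ↦ (∏ i, ((D i : ℝ) + C i / t)) * K) Filter.atTop
      (nhds ((∏ i, ((D i : ℝ) + 0)) * K)) :=
    (tendsto_finsetProd _ fun i _ ↦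
      (tendsto_const_div_atTop_nhds_zero_nat _).const_add _).mul_const _
  have hlt := hlim.eventually_lt_const (u := (∏ i, (D i : ℝ)) * K + 1) (by simp)
  obtain ⟨t, ht, ht0⟩ := (hlt.and (Filter.eventually_gt_atTop 0)).exists
  refine ⟨t, ht0, ?_⟩
  have htpos : (0 : ℝ) < t := by exact_mod_cast ht0
  have hscale : (∏ i, ((D i : ℝ) + C i / t)) * t ^ Fintype.card τ = ∏ i, (D i * t + C i) := by
    rw [← Finset.card_univ, ← Finset.prod_const, ← Finset.prod_mul_distrib]
    push_cast
    exact Finset.prod_congr rfl fun i _ ↦ by rw [add_mul, div_mul_cancel₀ _ htpos.ne']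
  have := mul_lt_mul_of_pos_right ht (pow_pos htpos (Fintype.card τ))
  rw [mul_right_comm, hscale] at this
  exact_mod_cast this

variable {F : R} {m : σ → R} {e s : ℕ} {D : π → τ → ℕ} {A₀ : τ ⊕ π → ℕ} {A : σ → τ ⊕ π → ℕ}
  {a : τ → ℕ} {c : π → ℕ}

lemma exists_finrank_monomialBox_lt (he : 0 < e) (hρ : ∀ p, ρ p ^ e ∈ monomialBox k g (D p))
    (hs : (∏ t, (e * a t + ∑ p, c p * D p t)) * e ^ Fintype.card π ≤ s * e ^ Fintype.card τ)
    (b : ℕ) :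
    ∃ N : ℕ, Module.finrank k (monomialBox k (Sum.elim g ρ) (N • Sum.elim a c + fun _ ↦ b)) <
      (s + 1) * N ^ Fintype.card τ := by
  obtain ⟨t, -, hlt⟩ := exists_pos_prod_mul_lt (fun i ↦ e * a i + ∑ p, c p * D p i)
    (fun i ↦ b + ∑ p, b / e * D p i + 1) (e ^ Fintype.card π)
  have hbox : (e * t) • Sum.elim a c + (fun _ ↦ b) =
      Sum.elim (fun i ↦ e * t * a i + b) fun p ↦ e * t * c p + b := by
    ext (i | p) <;> simp
  have hdeg (i : τ) : e * t * a i + b + ∑ p, (e * t * c p + b) / e * D p i + 1 =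
      (e * a i + ∑ p, c p * D p i) * t + (b + ∑ p, b / e * D p i + 1) := by
    simp only [mul_assoc e, Nat.mul_add_div he, add_mul _ (b / e), Finset.sum_add_distrib,
      add_mul _ _ t, Finset.sum_mul]
    ring_nf
  refine ⟨e * t, ?_⟩
  rw [hbox]
  calc _ ≤ (∏ i, (e * t * a i + b + ∑ p, (e * t * c p + b) / e * D p i + 1)) *
        e ^ Fintype.card π := finrank_monomialBox_sumElim_le he hρ _ _
    _ = (∏ i, ((e * a i + ∑ p, c p * D p i) * t + (b + ∑ p, b / e * D p i + 1))) *
        e ^ Fintype.card π := by simp only [hdeg]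
    _ < _ := hlt
    _ ≤ (s * e ^ Fintype.card τ + e ^ Fintype.card τ) * t ^ Fintype.card τ := by
        gcongr
        exact Nat.one_le_pow _ _ he
    _ = (s + 1) * (e * t) ^ Fintype.card τ := by rw [mul_pow]; ring

/-- The products `F ^ γ * m ^ α * v i` would be independent, and there are
`(s + 1) * N ^ (card σ + 1)` of them with all exponents below `N`, too many for their box. -/
lemma not_linearIndependent_quotient [Algebra (MvPolynomial σ k) R]
    [IsScalarTower k (MvPolynomial σ k) R] (hτ : Fintype.card τ = Fintype.card σ + 1) (he : 0 < e)
    (hρ : ∀ p, ρ p ^ e ∈ monomialBox k g (D p)) (hF : F ∈ nonZeroDivisors R)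
    (hFbox : F ∈ monomialBox k (Sum.elim g ρ) A₀)
    (hm : ∀ j, algebraMap (MvPolynomial σ k) R (X j) ∈ monomialBox k (Sum.elim g ρ) (A j))
    (hA : A₀ + ∑ j, A j ≤ Sum.elim a c)
    (hs : (∏ t, (e * a t + ∑ p, c p * D p t)) * e ^ Fintype.card π ≤ s * e ^ Fintype.card τ)
    {b : ℕ} {v : Fin (s + 1) → R} (hv : ∀ i, v i ∈ monomialBox k (Sum.elim g ρ) fun _ ↦ b) :
    ¬ LinearIndependent (MvPolynomial σ k) fun i ↦ Ideal.Quotient.mk (Ideal.span {F}) (v i) := by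
  intro hli
  obtain ⟨N, hlt⟩ := exists_finrank_monomialBox_lt he hρ hs b
  have hcard := card_mul_pow_le_finrank hF hli (N := N) fun γ α i ↦
    monomialBox_mono (add_le_add_left (nsmul_le_nsmul_right hA N) _) <|
      pow_mul_prod_pow_mul_mem_monomialBox hFbox hm (hv i) γ.2.le (α := fun j ↦ α j)
        fun j ↦ (α j).2.le
  rw [Fintype.card_fin, ← hτ] at hcard
  exact hcard.not_gt hlt

/-- A Bezout-type bound. Here `a` and `c` bound the degrees of `F * ∏ j, m j` in the `g t` and the
roots `ρ p`. Trading `ρ p ^ e` for its value shifts `c p` to a degree `c p / e * D p t` in `g t`,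
and leaves `e` exponents of each root, whence `hs`. -/
theorem exists_ne_zero_encard_fibre_le (hτ : Fintype.card τ = Fintype.card σ + 1) (he : 0 < e)
    (hρ : ∀ p, ρ p ^ e ∈ monomialBox k g (D p)) (hF : F ∈ nonZeroDivisors R)
    (hFbox : F ∈ monomialBox k (Sum.elim g ρ) A₀)
    (hm : ∀ j, m j ∈ monomialBox k (Sum.elim g ρ) (A j)) (hA : A₀ + ∑ j, A j ≤ Sum.elim a c)
    (hs : (∏ t, (e * a t + ∑ p, c p * D p t)) * e ^ Fintype.card π ≤ s * e ^ Fintype.card τ) :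
    ∃ h : MvPolynomial σ k, h ≠ 0 ∧ ∀ μ : σ → k, MvPolynomial.eval μ h ≠ 0 →
      ∀ Φ : Set (R →ₐ[k] k), (∀ φ ∈ Φ, φ F = 0 ∧ ∀ j, φ (m j) = μ j) →
        Φ.InjOn (fun φ t ↦ φ (Sum.elim g ρ t)) → Φ.encard ≤ s := by
  let _ : Algebra (MvPolynomial σ k) R := (aeval m).toAlgebra
  have : IsScalarTower k (MvPolynomial σ k) R :=
    .of_algebraMap_eq fun c ↦ ((aeval m).commutes c).symm
  have hX (j : σ) : algebraMap (MvPolynomial σ k) R (X j) = m j := MvPolynomial.aeval_X m j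
  let q := Ideal.Quotient.mkₐ k (Ideal.span {F})
  obtain ⟨h, hh, hfibre⟩ := exists_ne_zero_encard_algHom_le (k := k) (K := MvPolynomial σ k)
    (g := q ∘ Sum.elim g ρ) (s := s) fun v hv ↦ by
      simp only [← map_monomialBox, Submodule.mem_map] at hv
      choose w hw hwv using hv
      rw [← funext hwv]
      exact not_linearIndependent_quotient hτ he hρ hF hFbox (by simpa only [hX] using hm) hA hs hw
  refine ⟨h, hh, fun μ hμ Φ hΦ hinj ↦ ?_⟩
  let Φ' : Set (_ →ₐ[k] k) := {φ | φ.comp q ∈ Φ}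
  have hlift : Φ ⊆ (fun φ ↦ φ.comp q) '' Φ' := fun φ hφ ↦ by
    have hker : ∀ x ∈ Ideal.span {F}, φ x = 0 := fun x hx ↦ by
      obtain ⟨y, rfl⟩ := Ideal.mem_span_singleton'.1 hx
      rw [map_mul, (hΦ φ hφ).1, mul_zero]
    have hcomp : (Ideal.Quotient.liftₐ _ φ hker).comp q = φ := AlgHom.ext fun x ↦ rfl
    exact ⟨_, by rwa [Set.mem_ofPred_eq, hcomp], hcomp⟩
  refine (Set.encard_le_encard hlift).trans <| (Set.encard_image_le _ _).trans <|
    hfibre (MvPolynomial.eval μ) hμ Φ' (fun φ hφ p ↦ ?_) fun φ hφ φ' hφ' heq ↦ ?_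
  · have haeval : (φ.comp q).comp (aeval m) = aeval μ :=
      MvPolynomial.algHom_ext fun j ↦ by simpa using (hΦ _ hφ).2 j
    exact DFunLike.congr_fun haeval p
  · exact (AlgHom.cancel_right (Ideal.Quotient.mkₐ_surjective k _)).1 (hinj hφ hφ' heq)

end Bezout

section CayleyMenger

variable {ι R R' : Type*} [CommRing R] [CommRing R'] {X : Matrix ι ι R}

/-- The Cayley–Menger matrix of a matrix `X` of squared distances: `X` bordered by a row and a
column of ones, which are indexed by `none`. -/
def cayleyMenger (X : Matrix ι ι R) : Matrix (Option ι) (Option ι) R :=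
  .of fun
    | none, none => 0
    | none, some _ => 1
    | some _, none => 1
    | some i, some j => X i j

lemma cayleyMenger_map (X : Matrix ι ι R) (f : R →+* R') :
    (cayleyMenger X).map f = cayleyMenger (X.map f) := by
  ext (_ | _) (_ | _) <;> simp [cayleyMenger]

lemma isSymm_cayleyMenger (hX : X.IsSymm) : (cayleyMenger X).IsSymm := by
  ext (_ | i) (_ | j) <;> simp [cayleyMenger, hX.apply]

variable [Fintype ι] (v : Option ι → R)

lemma cayleyMenger_mulVec_none : (cayleyMenger X).mulVec v none = ∑ j, v (some j) := by
  simp [cayleyMenger, Matrix.mulVec, dotProduct, Fintype.sum_option]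

lemma cayleyMenger_mulVec_some (i : ι) :
    (cayleyMenger X).mulVec v (some i) = v none + ∑ j, X i j * v (some j) := by
  simp [cayleyMenger, Matrix.mulVec, dotProduct, Fintype.sum_option]

end CayleyMenger

section PairMatrix

lemma card_pairIdx (n : ℕ) : Fintype.card (PairIdx n) = n * (n - 1) / 2 := by
  let e : PairIdx n ≃ (Σ j : Fin n, Fin j) :=
    { toFun p := ⟨p.1.2, p.1.1, p.2⟩
      invFun q := ⟨(⟨q.2, q.2.2.trans q.1.2⟩, q.1), q.2.2⟩ }
  simp [Fintype.card_congr e, Fin.sum_univ_eq_sum_range (fun i ↦ i) n, Finset.sum_range_id]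

lemma le_card_pairIdx {n : ℕ} (hn : 3 ≤ n) : n ≤ Fintype.card (PairIdx n) := by
  rw [card_pairIdx, Nat.le_div_iff_mul_le two_pos]
  exact Nat.mul_le_mul_left n (by lia)

variable {n : ℕ} {R R' : Type*} [CommRing R] [CommRing R']

/-- The symmetric matrix with zero diagonal whose entry at `i < j` is `Y ⟨(i, j), _⟩`. -/
def pairMatrix (Y : PairIdx n → R) : Matrix (Fin n) (Fin n) R :=
  .of fun i j ↦ if h : i < j then Y ⟨(i, j), h⟩ else if h : j < i then Y ⟨(j, i), h⟩ else 0

lemma pairMatrix_map (Y : PairIdx n → R) (f : R →+* R') :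
    (pairMatrix Y).map f = pairMatrix fun p ↦ f (Y p) := by
  ext i j
  simp only [pairMatrix, Matrix.map_apply, Matrix.of_apply]
  split_ifs <;> simp

lemma map_det_cayleyMenger_pairMatrix (f : R →+* R') (Y : PairIdx n → R) :
    f (cayleyMenger (pairMatrix Y)).det = (cayleyMenger (pairMatrix (f ∘ Y))).det := by
  rw [RingHom.map_det, RingHom.mapMatrix_apply, cayleyMenger_map, pairMatrix_map]
  rfl

lemma pairMatrix_of_isSymm {X : Matrix (Fin n) (Fin n) R} (hX : X.IsSymm)
    (hdiag : ∀ i, X i i = 0) : pairMatrix (fun p ↦ X p.1.1 p.1.2) = X := by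
  ext i j
  obtain h | rfl | h := lt_trichotomy i j
  · simp [pairMatrix, h]
  · simp [pairMatrix, hdiag]
  · simp [pairMatrix, h, h.not_gt, hX.apply]

/-- Whether the index `o` occurs in the pair `p`, as an exponent. It is both the degree of the
column `o` of a Cayley–Menger matrix in the squared distance `p`, and the degree in the variable
`o` of the power of the distance `p`. -/
def incidence (o : Option (Fin n)) (p : PairIdx n) : ℕ :=
  if o = some p.1.1 ∨ o = some p.1.2 then 1 else 0

lemma sum_incidence_left (p : PairIdx n) : ∑ o, incidence o p = 2 := by
  have hfilter : Finset.univ.filter (fun o ↦ o = some p.1.1 ∨ o = some p.1.2) =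
      {some p.1.1, some p.1.2} := by ext; simp
  simp [incidence, Finset.sum_boole, hfilter, p.2.ne]

lemma sum_incidence_none : ∑ p : PairIdx n, incidence none p = 0 := by simp [incidence]

lemma sum_incidence_some_le (j : Fin n) : ∑ p, incidence (some j) p ≤ n - 1 := by
  let other (p : PairIdx n) : Fin n := if p.1.1 = j then p.1.2 else p.1.1
  let incident : Finset (PairIdx n) := {p | some j = some p.1.1 ∨ some j = some p.1.2}
  calc ∑ p, incidence (some j) p
      = incident.card := by simp [incident, incidence, Finset.sum_boole]
    _ ≤ (Finset.univ.erase j).card := by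
        refine Finset.card_le_card_of_injOn other (fun p hp ↦ ?_) fun p hp p' hp' h ↦ ?_
        · simp only [incident, Finset.coe_filter, Finset.mem_univ, true_and,
            Option.some_inj] at hp
          have := p.2.ne
          grind
        · simp only [incident, Finset.coe_filter, Finset.mem_univ, true_and,
            Option.some_inj] at hp hp'
          have := p.2
          have := p'.2
          grind
    _ = n - 1 := by simp

variable {k : Type*} [Field k] [Algebra k R] (Y : PairIdx n → R)

lemma cayleyMenger_mem_monomialBox (a b : Option (Fin n)) :
    cayleyMenger (pairMatrix Y) a b ∈ monomialBox k Y (incidence b) := by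
  rcases a with _ | i <;> rcases b with _ | j
  · exact zero_mem _
  · exact one_mem_monomialBox
  · exact one_mem_monomialBox
  · simp only [cayleyMenger, pairMatrix, Matrix.of_apply]
    split_ifs with h h
    · exact self_mem_monomialBox (by simp [incidence])
    · exact self_mem_monomialBox (by simp [incidence])
    · exact zero_mem _

lemma det_cayleyMenger_mem_monomialBox :
    (cayleyMenger (pairMatrix Y)).det ∈ monomialBox k Y fun _ ↦ 2 := by
  convert det_mem_monomialBox (cayleyMenger_mem_monomialBox (k := k) Y) using 2
  ext p
  rw [Finset.sum_apply, sum_incidence_left]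

lemma adjugate_cayleyMenger_mem_monomialBox (a b : Option (Fin n)) :
    (cayleyMenger (pairMatrix Y)).adjugate a b ∈ monomialBox k Y fun _ ↦ 2 := by
  have hupdate (a' b' : Option (Fin n)) :
      (cayleyMenger (pairMatrix Y)).updateRow b (Pi.single a 1) a' b' ∈
        monomialBox k Y (incidence b') := by
    rw [Matrix.updateRow_apply]
    split_ifs
    · rw [Pi.single_apply]
      split_ifs
      · exact one_mem_monomialBox
      · exact zero_mem _
    · exact cayleyMenger_mem_monomialBox Y a' b'
  rw [Matrix.adjugate_apply]
  convert det_mem_monomialBox hupdate using 2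
  ext p
  rw [Finset.sum_apply, sum_incidence_left]

end PairMatrix

section DziobekFamily

variable {k R π : Type*} [Field k] [CommRing R] [Algebra k R] [Fintype π] {ρ Y : π → R}

lemma exists_prod_pow_mul_mem_monomialBox {r : ℕ}
    (hY : (∀ p, Y p = ρ p ^ r) ∨ ∀ p, ρ p ^ r * Y p = 1) (a : ℕ) :
    ∃ d : ℕ, ∀ x ∈ monomialBox k Y fun _ ↦ a,
      (∏ p, ρ p) ^ d * x ∈ monomialBox k ρ fun _ ↦ r * a := by
  obtain ⟨d, hd⟩ : ∃ d, ∀ f : π → ℕ, f ≤ (fun _ ↦ a) →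
      (∏ p, ρ p) ^ d * ∏ p, Y p ^ f p ∈ monomialBox k ρ fun _ ↦ r * a := by
    rcases hY with hY | hY
    · refine ⟨0, fun f hf ↦ ?_⟩
      simp only [hY, pow_zero, one_mul, ← pow_mul]
      exact prod_pow_mem_monomialBox fun p ↦ Nat.mul_le_mul_left r (hf p)
    · refine ⟨r * a, fun f hf ↦ ?_⟩
      have hcancel : (∏ p, ρ p) ^ (r * a) * ∏ p, Y p ^ f p = ∏ p, ρ p ^ (r * (a - f p)) := by
        rw [← Finset.prod_pow, ← Finset.prod_mul_distrib]
        refine Finset.prod_congr rfl fun p _ ↦ ?_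
        have hsplit : r * a = r * f p + r * (a - f p) := by
          rw [← mul_add, Nat.add_sub_cancel' (hf p)]
        rw [hsplit, pow_add, pow_mul, mul_right_comm, ← mul_pow, hY, one_pow, one_mul]
      rw [hcancel]
      exact prod_pow_mem_monomialBox fun p ↦ Nat.mul_le_mul_left r (Nat.sub_le _ _)
  refine ⟨d, fun x hx ↦ ?_⟩
  refine Submodule.span_induction (hx := hx) ?_ ?_ ?_ ?_
  · rintro _ ⟨f, hf, rfl⟩
    exact hd f hf
  · simp
  · intro x y _ _ hx hy
    rw [mul_add]
    exact add_mem hx hy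
  · intro c x _ hx
    rw [mul_smul_comm]
    exact Submodule.smul_mem _ _ hx

variable {n : ℕ} (S : Finset (Fin n)) (c : R)

/-- Masses of the Dziobek configuration with parameters `X`. For `i ∈ S` the parameter
`X (some i)` is the ratio of the `i`-th coefficient of the affine relation to the `i`-th mass; that
coefficient is proportional to the `(i, l)` entry of the adjugate of the Cayley–Menger matrix, and
`X none` carries the factor of proportionality. The masses outside `S` are free. The factor `c`
clears denominators of the adjugate. -/
def dziobekMass (Y : PairIdx n → R) (l : Fin n) (X : Option (Fin n) → R) (i : Fin n) : R :=
  if i ∈ S then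
    X none * (c * (cayleyMenger (pairMatrix Y)).adjugate (some i) (some l) *
      ∏ j ∈ S.erase i, X (some j))
  else X (some i)

/-- The ratios of coefficient to mass along the affine relation of the Dziobek configuration with
parameters `X`; they vanish exactly outside the support `S` of the relation. -/
def dziobekRatio (X : Option (Fin n) → R) (i : Fin n) : R :=
  if i ∈ S then X (some i) else 0

/-- The power `c2` of the distances of the Dziobek configuration with parameters `X`. -/
def dziobekBase (ε : R) (X : Option (Fin n) → R) (p : PairIdx n) : R :=
  1 + ε * (dziobekRatio S X p.1.1 * dziobekRatio S X p.1.2)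

variable {R' : Type*} [CommRing R'] (f : R →+* R') (X : Option (Fin n) → R)

lemma map_dziobekRatio (i : Fin n) : f (dziobekRatio S X i) = dziobekRatio S (f ∘ X) i := by
  simp [dziobekRatio, apply_ite f]

lemma map_dziobekBase (ε : R) (p : PairIdx n) :
    f (dziobekBase S ε X p) = dziobekBase S (f ε) (f ∘ X) p := by
  simp [dziobekBase, map_dziobekRatio]

lemma map_dziobekMass (Y : PairIdx n → R) (l i : Fin n) :
    f (dziobekMass S c Y l X i) = dziobekMass S (f c) (f ∘ Y) l (f ∘ X) i := by
  have hadj : f ((cayleyMenger (pairMatrix Y)).adjugate (some i) (some l)) =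
      (cayleyMenger (pairMatrix (f ∘ Y))).adjugate (some i) (some l) := by
    rw [← Matrix.map_apply (f := f), ← RingHom.mapMatrix_apply, RingHom.map_adjugate,
      RingHom.mapMatrix_apply, cayleyMenger_map, pairMatrix_map]
    rfl
  simp [dziobekMass, apply_ite f, hadj]

variable {X}

lemma dziobekRatio_mem_monomialBox (i : Fin n) :
    dziobekRatio S X i ∈ monomialBox k X (Pi.single (some i) 1) := by
  rw [dziobekRatio]
  split_ifs
  · exact self_mem_monomialBox (by simp)
  · exact zero_mem _

lemma dziobekBase_mem_monomialBox (ε : k) (p : PairIdx n) :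
    dziobekBase S (algebraMap k R ε) X p ∈ monomialBox k X fun o ↦ incidence o p := by
  have hsingle : Pi.single (some p.1.1) 1 + Pi.single (some p.1.2) 1 = fun o ↦ incidence o p := by
    have := p.2.ne
    ext o
    simp only [Pi.add_apply, Pi.single_apply, incidence]
    grind
  refine add_mem one_mem_monomialBox ?_
  rw [← Algebra.smul_def, ← hsingle]
  exact Submodule.smul_mem _ _ (mul_mem_monomialBox (dziobekRatio_mem_monomialBox S _)
    (dziobekRatio_mem_monomialBox S _))

variable {c} {Y : PairIdx n → R} {a : ℕ}

lemma dziobekMass_mem_monomialBox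
    (hc : ∀ x ∈ monomialBox k Y fun _ ↦ 2, c * x ∈ monomialBox k ρ fun _ ↦ a) (l i : Fin n) :
    dziobekMass S c Y l X i ∈ monomialBox k (Sum.elim X ρ) (Sum.elim 1 fun _ ↦ a) := by
  rw [dziobekMass]
  split_ifs
  · have hratio : X none * ∏ j ∈ S.erase i, X (some j) ∈ monomialBox k X 1 := by
      have h := prod_pow_mem_monomialBox (k := k) (g := X) (A := 1)
        (f := fun o ↦ o.elim 1 fun j ↦ if j ∈ S.erase i then 1 else 0)
        (by rintro (_ | j) <;> simp [ite_le_one])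
      simpa only [Fintype.prod_option, Option.elim, pow_one, pow_ite, pow_zero,
        Finset.prod_ite_mem, Finset.univ_inter] using h
    have hadj := hc _ (adjugate_cayleyMenger_mem_monomialBox Y (some i) (some l))
    have hmul := mul_mem_monomialBox (monomialBox_le_sumElim_left (ρ := ρ) hratio)
      (monomialBox_le_sumElim_right (g := X) hadj)
    rw [← Sum.elim_add_add, add_zero, zero_add] at hmul
    convert hmul using 1
    ring
  · exact self_mem_monomialBox (g := Sum.elim X ρ) (t := .inl (some i)) le_rfl

/-- A bound on the number of Dziobek configurations with generic masses, fixed support and fixed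
sign of the coupling constant, where `e` is the absolute value of the exponent of the distances. -/
def dziobekBound (n e : ℕ) : ℕ :=
  n * (n * e + 4 * (n + 1) * (n - 1)) ^ n * e ^ (Fintype.card (PairIdx n) - n)

lemma prod_degree_mul_le_dziobekBound {e : ℕ} (hn : n ≤ Fintype.card (PairIdx n)) :
    (∏ o : Option (Fin n), (e * n + ∑ p, 4 * (n + 1) * incidence o p)) *
        e ^ Fintype.card (PairIdx n) ≤
      dziobekBound n e * e ^ Fintype.card (Option (Fin n)) := by
  simp only [← Finset.mul_sum, Fintype.prod_option, sum_incidence_none, dziobekBound,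
    Fintype.card_option, Fintype.card_fin]
  calc _ ≤ e * n * (∏ _j : Fin n, (e * n + 4 * (n + 1) * (n - 1))) *
        e ^ (Fintype.card (PairIdx n) - n + n) := by
        rw [Nat.sub_add_cancel hn, mul_zero, add_zero]
        gcongr with j
        exact sum_incidence_some_le j
    _ = _ := by
        rw [Finset.prod_const, Finset.card_univ, Fintype.card_fin]
        ring

variable {ρ : PairIdx n → R} {e : ℕ} {ε : k}

theorem exists_ne_zero_encard_dziobekMass_fibre_le (hn : n ≤ Fintype.card (PairIdx n)) (he : 0 < e)
    (hρ : ∀ p, ρ p ^ e = dziobekBase S (algebraMap k R ε) X p)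
    (hρ0 : ∀ p, ρ p ∈ nonZeroDivisors R)
    (hY : (∀ p, Y p = ρ p ^ 2) ∨ ∀ p, ρ p ^ 2 * Y p = 1)
    (hdet : (cayleyMenger (pairMatrix Y)).det ∈ nonZeroDivisors R) (l : Fin n) :
    ∃ d : ℕ, ∃ h : MvPolynomial (Fin n) k, h ≠ 0 ∧ ∀ μ, MvPolynomial.eval μ h ≠ 0 →
      ∀ Φ : Set (R →ₐ[k] k),
        (∀ φ ∈ Φ, φ (cayleyMenger (pairMatrix Y)).det = 0 ∧
          ∀ i, φ (dziobekMass S ((∏ p, ρ p) ^ d) Y l X i) = μ i) →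
        Φ.InjOn (fun φ : R →ₐ[k] k ↦ φ ∘ X) → Φ.encard ≤ dziobekBound n e := by
  obtain ⟨d, hd⟩ := exists_prod_pow_mul_mem_monomialBox (k := k) hY 2
  obtain ⟨h, hh, hfibre⟩ := exists_ne_zero_encard_fibre_le (k := k)
    (F := (∏ p, ρ p) ^ d * (cayleyMenger (pairMatrix Y)).det) (g := X)
    (A₀ := Sum.elim 0 fun _ ↦ 4) (A := fun _ ↦ Sum.elim 1 fun _ ↦ 4)
    (a := fun _ ↦ n) (c := fun _ ↦ 4 * (n + 1)) (by simp) he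
    (fun p ↦ hρ p ▸ dziobekBase_mem_monomialBox S ε p)
    (mul_mem (pow_mem (prod_mem fun p _ ↦ hρ0 p) d) hdet)
    (monomialBox_le_sumElim_right (hd _ (det_cayleyMenger_mem_monomialBox Y)))
    (dziobekMass_mem_monomialBox S hd l)
    (by rintro (_ | _) <;> simp [add_mul, mul_comm, add_comm])
    (prod_degree_mul_le_dziobekBound hn)
  refine ⟨d, h, hh, fun μ hμ Φ hΦ hinj ↦ hfibre μ hμ Φ (fun φ hφ ↦ ?_) fun φ hφ φ' hφ' heq ↦
    hinj hφ hφ' (funext fun o ↦ congrFun heq (.inl o))⟩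
  exact ⟨by rw [map_mul, (hΦ φ hφ).1, mul_zero], (hΦ φ hφ).2⟩

end DziobekFamily

lemma mem_nonZeroDivisors_of_analyticOnNhd {𝕜 E : Type*} [NontriviallyNormedField 𝕜]
    [NormedAddCommGroup E] [NormedSpace 𝕜 E] {U : Set E} (hU : IsOpen U) (hconn : IsPreconnected U)
    {f : E → 𝕜} (hf : AnalyticOnNhd 𝕜 f U) {z : E} (hz : z ∈ U) (hfz : f z ≠ 0) {F : C(U, 𝕜)}
    (hF : ∀ u : U, F u = f u) : F ∈ nonZeroDivisors C(U, 𝕜) := by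
  refine mem_nonZeroDivisors_iff_right.2 fun G hG ↦ ContinuousMap.ext fun u ↦ ?_
  by_contra hGu
  have hlocal : f =ᶠ[nhds (u : E)] 0 := by
    rw [← hU.nhdsWithin_eq u.2, ← map_nhds_subtype_val, Filter.EventuallyEq, Filter.eventually_map]
    filter_upwards [G.continuous.continuousAt.eventually_ne hGu] with v hv
    exact (hF v).symm.trans ((mul_eq_zero.1 (DFunLike.congr_fun hG v)).resolve_left hv)
  exact hfz (hf.eqOn_zero_of_preconnected_of_eventuallyEq_zero hconn u.2 hlocal hz)

lemma det_cayleyMenger_pairMatrix_one_ne_zero {k : Type*} [Field k] [CharZero k] {n : ℕ}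
    (hn : n ≠ 0) : (cayleyMenger (pairMatrix (1 : PairIdx n → k))).det ≠ 0 := by
  refine fun hdet ↦ ?_
  obtain ⟨v, hv0, hv⟩ := Matrix.exists_mulVec_eq_zero_iff.2 hdet
  have hsum : ∑ j, v (some j) = 0 := by simpa [cayleyMenger_mulVec_none] using congrFun hv none
  have hones (i j : Fin n) :
      pairMatrix (1 : PairIdx n → k) i j = 1 - (Pi.single i 1 : Fin n → k) j := by
    have := lt_trichotomy i j
    simp only [pairMatrix, Matrix.of_apply, Pi.one_apply, Pi.single_apply]
    grind
  have hconst (i : Fin n) : v (some i) = v none := by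
    have h := congrFun hv (some i)
    simp only [cayleyMenger_mulVec_some, hones, sub_mul, one_mul, Finset.sum_sub_distrib, hsum,
      Pi.single_apply, ite_mul, zero_mul, Finset.sum_ite_eq', Finset.mem_univ, if_true,
      Pi.zero_apply] at h
    linear_combination -h
  have hnone : v none = 0 := by simpa [hconst, hn] using hsum
  exact hv0 (funext fun o ↦ by cases o <;> simp [hconst, hnone])

lemma analyticAt_rpow_const {E : Type*} [NormedAddCommGroup E] [NormedSpace ℝ E] {f : E → ℝ}
    {x : E} (s : ℝ) (hf : AnalyticAt ℝ f x) (hfx : 0 < f x) :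
    AnalyticAt ℝ (fun y ↦ f y ^ s) x := by
  refine ((((analyticAt_log hfx).comp hf).mul (analyticAt_const (v := s))).rexp').congr ?_
  filter_upwards [hf.continuousAt.eventually (lt_mem_nhds hfx)] with y hy
  exact (Real.rpow_def_of_pos hy s).symm

lemma analyticAt_det_cayleyMenger_pairMatrix {n : ℕ} {E : Type*} [NormedAddCommGroup E]
    [NormedSpace ℝ E] {Y : E → PairIdx n → ℝ} {t : E} (hY : ∀ p, AnalyticAt ℝ (Y · p) t) :
    AnalyticAt ℝ (fun u ↦ (cayleyMenger (pairMatrix (Y u))).det) t := by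
  simp only [Matrix.det_apply']
  refine Finset.analyticAt_fun_sum _ fun σ _ ↦ analyticAt_const.mul
    (Finset.analyticAt_fun_prod _ fun b _ ↦ ?_)
  generalize σ b = a
  rcases a with _ | i <;> rcases b with _ | j <;>
    simp only [cayleyMenger, pairMatrix, Matrix.of_apply]
  iterate 3 exact analyticAt_const
  split_ifs
  exacts [hY _, hY _, analyticAt_const]

section DziobekDomain

variable {n : ℕ} (S : Finset (Fin n)) (ε : ℝ)

/-- The parameters for which the powers `c2` of the distances are positive. -/
def dziobekDomain : Set (Option (Fin n) → ℝ) := {t | ∀ p, 0 < dziobekBase S ε t p}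

lemma analyticAt_dziobekBase (p : PairIdx n) (t : Option (Fin n) → ℝ) :
    AnalyticAt ℝ (dziobekBase S ε · p) t := by
  have hratio (i : Fin n) : AnalyticAt ℝ (dziobekRatio S · i) t := by
    simp only [dziobekRatio]
    split_ifs
    · exact (ContinuousLinearMap.proj (R := ℝ) (φ := fun _ ↦ ℝ) (some i)).analyticAt t
    · exact analyticAt_const
  exact analyticAt_const.add (analyticAt_const.mul ((hratio _).mul (hratio _)))

lemma continuous_dziobekBase (p : PairIdx n) : Continuous (dziobekBase S ε · p) :=
  continuous_iff_continuousAt.2 fun t ↦ (analyticAt_dziobekBase S ε p t).continuousAt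

lemma isOpen_dziobekDomain : IsOpen (dziobekDomain S ε) := by
  simp only [dziobekDomain, Set.ofPred_forall]
  exact isOpen_iInter_of_finite fun p ↦ isOpen_lt continuous_const (continuous_dziobekBase S ε p)

lemma dziobekBase_zero (p : PairIdx n) : dziobekBase S ε 0 p = 1 := by
  simp [dziobekBase, dziobekRatio]

lemma zero_mem_dziobekDomain : 0 ∈ dziobekDomain S ε := fun p ↦ by simp [dziobekBase_zero]

lemma starConvex_dziobekDomain : StarConvex ℝ 0 (dziobekDomain S ε) := by
  refine starConvex_zero_iff.2 fun t ht b hb0 hb1 p ↦ ?_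
  have hscale : dziobekBase S ε (b • t) p = (1 - b ^ 2) + b ^ 2 * dziobekBase S ε t p := by
    simp only [dziobekBase, dziobekRatio, Pi.smul_apply, smul_eq_mul]
    split_ifs <;> ring
  rw [hscale]
  nlinarith [ht p, pow_le_one₀ hb0 hb1 (n := 2), mul_nonneg (sq_nonneg b) (ht p).le]

lemma isPreconnected_dziobekDomain : IsPreconnected (dziobekDomain S ε) :=
  ((starConvex_dziobekDomain S ε).isPathConnected
    (zero_mem_dziobekDomain S ε)).isConnected.isPreconnected

/-- The `s`-th power of `dziobekBase`, as an element of the ring in which parameters are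
eliminated. -/
noncomputable def dziobekPow (s : ℝ) (p : PairIdx n) : C(dziobekDomain S ε, ℝ) where
  toFun t := dziobekBase S ε t p ^ s
  continuous_toFun := ((continuous_dziobekBase S ε p).comp continuous_subtype_val).rpow_const
    fun t ↦ .inl (t.2 p).ne'

lemma dziobekPow_mul_dziobekPow_neg (s : ℝ) (p : PairIdx n) :
    dziobekPow S ε s p * dziobekPow S ε (-s) p = 1 := by
  ext t
  simp [dziobekPow, ← Real.rpow_add (t.2 p)]

lemma dziobekPow_inv_sq_eq_or_mul_eq_one (c2 : ℤ) :
    (∀ p, dziobekPow S ε (c2 : ℝ)⁻¹ p ^ 2 = dziobekPow S ε (c2.natAbs : ℝ)⁻¹ p ^ 2) ∨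
      ∀ p, dziobekPow S ε (c2.natAbs : ℝ)⁻¹ p ^ 2 * dziobekPow S ε (c2 : ℝ)⁻¹ p ^ 2 = 1 := by
  obtain h | h := c2.natAbs_eq
  · have hcast : (c2 : ℝ) = c2.natAbs := by rw [← Int.cast_natCast, ← h]
    exact .inl fun p ↦ by rw [hcast]
  · have hcast : (c2 : ℝ)⁻¹ = -(c2.natAbs : ℝ)⁻¹ := by
      rw [← inv_neg, ← Int.cast_natCast, ← Int.cast_neg, ← h]
    exact .inr fun p ↦ by
      rw [hcast, ← mul_pow, dziobekPow_mul_dziobekPow_neg, one_pow]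

lemma dziobekPow_mem_nonZeroDivisors (s : ℝ) (p : PairIdx n) :
    dziobekPow S ε s p ∈ nonZeroDivisors C(dziobekDomain S ε, ℝ) :=
  (IsUnit.of_mul_eq_one _ (dziobekPow_mul_dziobekPow_neg S ε s p)).mem_nonZeroDivisors

/-- The mutual distances of the Dziobek configuration with parameters `t`. -/
noncomputable def dziobekDist (c2 : ℤ) (t : Option (Fin n) → ℝ) (p : PairIdx n) : ℝ :=
  dziobekBase S ε t p ^ (c2 : ℝ)⁻¹

lemma det_cayleyMenger_dziobekPow_mem_nonZeroDivisors (hn : n ≠ 0) (s : ℝ) :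
    (cayleyMenger (pairMatrix fun p ↦ dziobekPow S ε s p ^ 2)).det ∈
      nonZeroDivisors C(dziobekDomain S ε, ℝ) := by
  refine mem_nonZeroDivisors_of_analyticOnNhd (isOpen_dziobekDomain S ε)
    (isPreconnected_dziobekDomain S ε)
    (f := fun t ↦ (cayleyMenger (pairMatrix fun p ↦ (dziobekBase S ε t p ^ s) ^ 2)).det)
    (fun t ht ↦ analyticAt_det_cayleyMenger_pairMatrix fun p ↦
      (analyticAt_rpow_const s (analyticAt_dziobekBase S ε p t) (ht p)).pow 2)
    (zero_mem_dziobekDomain S ε) ?_ fun t ↦ ?_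
  · simpa [dziobekBase_zero, Pi.one_def] using det_cayleyMenger_pairMatrix_one_ne_zero hn
  · exact map_det_cayleyMenger_pairMatrix (ContinuousMap.evalAlgHom ℝ ℝ t).toRingHom _

/-- The parameters of the Dziobek configurations with masses `μ`. -/
def dziobekFibre (c2 : ℤ) (l : Fin n) (c : (PairIdx n → ℝ) → ℝ) (μ : Fin n → ℝ) :
    Set (Option (Fin n) → ℝ) :=
  {t ∈ dziobekDomain S ε | (cayleyMenger (pairMatrix fun p ↦ dziobekDist S ε c2 t p ^ 2)).det = 0 ∧
    ∀ i, dziobekMass S (c (dziobekBase S ε t)) (fun p ↦ dziobekDist S ε c2 t p ^ 2) l t i = μ i}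

theorem exists_ne_zero_encard_dziobekFibre_le (hn : n ≤ Fintype.card (PairIdx n)) {c2 : ℤ}
    (hc2 : c2 ≠ 0) (l : Fin n) :
    ∃ c : (PairIdx n → ℝ) → ℝ, (∀ b, (∀ p, 0 < b p) → c b ≠ 0) ∧
      ∃ h : MvPolynomial (Fin n) ℝ, h ≠ 0 ∧ ∀ μ, MvPolynomial.eval μ h ≠ 0 →
        (dziobekFibre S ε c2 l c μ).encard ≤ dziobekBound n c2.natAbs := by
  let X (o : Option (Fin n)) : C(dziobekDomain S ε, ℝ) :=
    ⟨fun t ↦ t.1 o, (continuous_apply o).comp continuous_subtype_val⟩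
  let eval (t : dziobekDomain S ε) : C(dziobekDomain S ε, ℝ) →ₐ[ℝ] ℝ :=
    ContinuousMap.evalAlgHom ℝ ℝ t
  let ρ := dziobekPow S ε (c2.natAbs : ℝ)⁻¹
  have he : c2.natAbs ≠ 0 := Int.natAbs_ne_zero.2 hc2
  have hρ (p) : ρ p ^ c2.natAbs = dziobekBase S (algebraMap ℝ _ ε) X p := by
    ext t
    have hmap : eval t (dziobekBase S (algebraMap ℝ _ ε) X p) = dziobekBase S ε t p :=
      map_dziobekBase S (eval t).toRingHom X _ p
    exact (Real.rpow_inv_natCast_pow (t.2 p).le he).trans hmap.symm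
  obtain ⟨d, h, hh, hfibre⟩ := exists_ne_zero_encard_dziobekMass_fibre_le S hn
    (Nat.pos_of_ne_zero he) hρ (dziobekPow_mem_nonZeroDivisors S ε _)
    (dziobekPow_inv_sq_eq_or_mul_eq_one S ε c2)
    (det_cayleyMenger_dziobekPow_mem_nonZeroDivisors S ε (Fin.pos l).ne' _) l
  let c (b : PairIdx n → ℝ) : ℝ := (∏ p, b p ^ (c2.natAbs : ℝ)⁻¹) ^ d
  refine ⟨c, fun b hb ↦ ?_, h, hh, fun μ hμ ↦ ?_⟩
  · exact pow_ne_zero _ (Finset.prod_ne_zero_iff.2 fun p _ ↦ (Real.rpow_pos_of_pos (hb p) _).ne')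
  let Φ := {φ | ∃ t : dziobekDomain S ε, t.1 ∈ dziobekFibre S ε c2 l c μ ∧ eval t = φ}
  have hsub : dziobekFibre S ε c2 l c μ ⊆ (fun φ : _ →ₐ[ℝ] ℝ ↦ φ ∘ X) '' Φ := fun t ht ↦
    ⟨eval ⟨t, ht.1⟩, ⟨_, ht, rfl⟩, rfl⟩
  refine (Set.encard_le_encard hsub).trans <| (Set.encard_image_le _ _).trans <|
    hfibre μ hμ Φ ?_ ?_
  · rintro _ ⟨t, ⟨-, hdet, hmass⟩, rfl⟩
    refine ⟨(map_det_cayleyMenger_pairMatrix (eval t).toRingHom _).trans hdet, fun i ↦ ?_⟩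
    refine (map_dziobekMass S _ (eval t).toRingHom X _ l i).trans (Eq.trans ?_ (hmass i))
    congr 1
    exact (map_pow (eval t) _ d).trans (congrArg (· ^ d) (map_prod (eval t) ρ Finset.univ))
  · rintro _ ⟨t, -, rfl⟩ _ ⟨t', -, rfl⟩ heq
    rw [Subtype.ext heq]

end DziobekDomain

section AffineRelations

variable {k V ι : Type*} [Field k] [AddCommGroup V] [Module k V] [Fintype ι] {x : ι → V}
  {v : ι → k}

/-- The space of affine relations between the points `x i`. -/
def affineRelations (k : Type*) {V ι : Type*} [Field k] [AddCommGroup V] [Module k V] [Fintype ι]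
    (x : ι → V) : Submodule k (ι → k) :=
  LinearMap.ker (Fintype.linearCombination k fun _ ↦ (1 : k)) ⊓
    LinearMap.ker (Fintype.linearCombination k x)

lemma mem_affineRelations : v ∈ affineRelations k x ↔ ∑ i, v i = 0 ∧ ∑ i, v i • x i = 0 := by
  simp [affineRelations, Fintype.linearCombination_apply]

lemma map_linearCombination_ker_eq_vectorSpan :
    (LinearMap.ker (Fintype.linearCombination k fun _ : ι ↦ (1 : k))).map
      (Fintype.linearCombination k x) = vectorSpan k (Set.range x) := by
  classical
  refine le_antisymm ?_ ?_
  · rintro _ ⟨v, hv, rfl⟩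
    have hsum : ∑ i, v i = 0 := by simpa [Fintype.linearCombination_apply] using hv
    have h := weightedVSub_mem_vectorSpan (s := Finset.univ) hsum x
    rwa [Finset.weightedVSub_eq_linear_combination _ hsum] at h
  · rw [vectorSpan_def, Submodule.span_le]
    rintro _ ⟨_, ⟨i, rfl⟩, _, ⟨j, rfl⟩, rfl⟩
    exact ⟨Pi.single i 1 - Pi.single j 1,
      by simp [Fintype.linearCombination_apply], by simp⟩

theorem finrank_vectorSpan_add_finrank_affineRelations [Nonempty ι] :
    Module.finrank k (vectorSpan k (Set.range x)) + Module.finrank k (affineRelations k x) + 1 =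
      Fintype.card ι := by
  classical
  obtain ⟨i⟩ := ‹Nonempty ι›
  let s : (ι → k) →ₗ[k] k := Fintype.linearCombination k fun _ ↦ 1
  let L := Fintype.linearCombination k x
  have hs : LinearMap.range s = ⊤ := LinearMap.range_eq_top.2 fun c ↦ ⟨Pi.single i c, by simp [s]⟩
  have hrank_s := s.finrank_range_add_finrank_ker
  have hrank_L := (L.domRestrict (LinearMap.ker s)).finrank_range_add_finrank_ker
  have hrelations : Module.finrank k (affineRelations k x) =
      Module.finrank k (LinearMap.ker (L.domRestrict (LinearMap.ker s))) := by
    rw [LinearMap.ker_domRestrict, ← Submodule.finrank_map_subtype_eq,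
      Submodule.map_comap_subtype]
    rfl
  rw [LinearMap.range_domRestrict, map_linearCombination_ker_eq_vectorSpan, ← hrelations]
    at hrank_L
  rw [hs, finrank_top, Module.finrank_self, Module.finrank_fintype_fun_eq_card] at hrank_s
  lia

end AffineRelations

section Adjugate

variable {k ι : Type*} [Field k] [Fintype ι] [DecidableEq ι]

lemma exists_adjugate_col_eq_smul {A : Matrix ι ι k} (hA : A.IsSymm) {v : ι → k}
    (hker : ∀ w, A.mulVec w = 0 ↔ ∃ c : k, c • v = w) {l : ι} (hl : v l ≠ 0) :
    A.det = 0 ∧ ∃ c : k, c ≠ 0 ∧ ∀ i, A.adjugate i l = c * v i := by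
  have hv : A.mulVec v = 0 := (hker v).2 ⟨1, one_smul k v⟩
  have hdet : A.det = 0 := Matrix.exists_mulVec_eq_zero_iff.1 ⟨v, fun h ↦ hl (congrFun h l), hv⟩
  obtain ⟨c, hc⟩ := (hker (A.adjugate.col l)).1 <| by
    rw [← Matrix.mulVec_single_one, Matrix.mulVec_mulVec, A.mul_adjugate, hdet, zero_smul,
      Matrix.zero_mulVec]
  refine ⟨hdet, c, ?_, fun i ↦ (congrFun hc i).symm⟩
  rintro rfl
  have hll : (A.updateRow l (Pi.single l 1)).det = 0 := by
    rw [← Matrix.adjugate_apply]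
    exact ((congrFun hc l).symm.trans (zero_mul _))
  obtain ⟨w, hw0, hw⟩ := Matrix.exists_mulVec_eq_zero_iff.2 hll
  have hwl : w l = 0 := by simpa [Matrix.mulVec] using congrFun hw l
  have hwi (i : ι) (hi : i ≠ l) : A.mulVec w i = 0 := by
    simpa [Matrix.mulVec, Matrix.updateRow_ne hi] using congrFun hw i
  have hdot : v l * A.mulVec w l = 0 := by
    calc v l * A.mulVec w l = v ⬝ᵥ A.mulVec w :=
          (Fintype.sum_eq_single (f := fun i ↦ v i * A.mulVec w i) l
            fun i hi ↦ by rw [hwi i hi, mul_zero]).symm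
      _ = A.mulVec v ⬝ᵥ w := by rw [Matrix.dotProduct_mulVec, ← Matrix.mulVec_transpose, hA.eq]
      _ = 0 := by rw [hv, zero_dotProduct]
  obtain ⟨d, rfl⟩ := (hker w).1 <| funext fun i ↦ by
    obtain rfl | hi := eq_or_ne i l
    exacts [(mul_eq_zero.1 hdot).resolve_left hl, hwi i hi]
  have hd : d = 0 := (mul_eq_zero.1 hwl).resolve_right hl
  exact hw0 (by rw [hd, zero_smul])

end Adjugate

section DistanceMatrix

/-- The matrix of the squared distances between the points `x i`. -/
noncomputable def sqDistMatrix {ι V : Type*} [PseudoMetricSpace V] (x : ι → V) : Matrix ι ι ℝ :=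
  .of fun i j ↦ dist (x i) (x j) ^ 2

lemma isSymm_sqDistMatrix {ι V : Type*} [PseudoMetricSpace V] (x : ι → V) :
    (sqDistMatrix x).IsSymm :=
  .ext fun i j ↦ by simp [sqDistMatrix, dist_comm]

variable {ι V : Type*} [Fintype ι] [NormedAddCommGroup V] [InnerProductSpace ℝ V] {x : ι → V}

lemma sum_sqDistMatrix_mul {v : ι → ℝ} (hv : ∑ j, v j = 0) (i : ι) :
    ∑ j, sqDistMatrix x i j * v j =
      ∑ j, v j * ‖x j‖ ^ 2 - 2 * inner ℝ (x i) (∑ j, v j • x j) := by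
  have hterm (j : ι) : sqDistMatrix x i j * v j =
      ‖x i‖ ^ 2 * v j + v j * ‖x j‖ ^ 2 - 2 * inner ℝ (x i) (v j • x j) := by
    rw [sqDistMatrix, Matrix.of_apply, dist_eq_norm, norm_sub_sq_real, inner_smul_right]
    ring
  simp only [hterm, Finset.sum_sub_distrib, Finset.sum_add_distrib, ← Finset.mul_sum, hv, inner_sum]
  ring

lemma cayleyMenger_sqDistMatrix_mulVec_eq_zero_iff [Nonempty ι] {v : Option ι → ℝ} :
    (cayleyMenger (sqDistMatrix x)).mulVec v = 0 ↔
      v ∘ some ∈ affineRelations ℝ x ∧ v none = -∑ j, v (some j) * ‖x j‖ ^ 2 := by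
  let w := ∑ j, v (some j) • x j
  have hsome (hsum : ∑ j, v (some j) = 0) (i : ι) :
      (cayleyMenger (sqDistMatrix x)).mulVec v (some i) =
        v none + ∑ j, v (some j) * ‖x j‖ ^ 2 - 2 * inner ℝ (x i) w := by
    rw [cayleyMenger_mulVec_some, sum_sqDistMatrix_mul hsum i, add_sub_assoc]
  simp only [mem_affineRelations, Function.comp_apply]
  refine ⟨fun h ↦ ?_, fun ⟨⟨hsum, hw⟩, hnone⟩ ↦ funext fun o ↦ ?_⟩
  · have hsum : ∑ j, v (some j) = 0 := by simpa [cayleyMenger_mulVec_none] using congrFun h none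
    have hrow (i : ι) : v none + ∑ j, v (some j) * ‖x j‖ ^ 2 = 2 * inner ℝ (x i) w :=
      sub_eq_zero.1 ((hsome hsum i).symm.trans (congrFun h (some i)))
    obtain ⟨i⟩ := ‹Nonempty ι›
    have hinner (j : ι) : inner ℝ (x j) w = inner ℝ (x i) w := by linarith [hrow i, hrow j]
    have hw : w = 0 := by
      refine (inner_self_eq_zero (𝕜 := ℝ)).1 ?_
      calc inner ℝ w w = ∑ j, v (some j) * inner ℝ (x j) w :=
            (sum_inner ..).trans (by simp only [real_inner_smul_left])
        _ = 0 := by simp only [hinner, ← Finset.sum_mul, hsum, zero_mul]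
    refine ⟨⟨hsum, hw⟩, ?_⟩
    have := hrow i
    rw [hw, inner_zero_right] at this
    linarith
  · cases o with
    | none => simpa [cayleyMenger_mulVec_none] using hsum
    | some i => simp [hsome hsum, w, hw, hnone]

variable [DecidableEq ι] [Nonempty ι]

theorem exists_adjugate_cayleyMenger_sqDistMatrix_eq
    (hrank : Module.finrank ℝ (affineRelations ℝ x) = 1) {v : ι → ℝ}
    (hv : v ∈ affineRelations ℝ x) {l : ι} (hl : v l ≠ 0) :
    (cayleyMenger (sqDistMatrix x)).det = 0 ∧ ∃ c : ℝ, c ≠ 0 ∧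
      ∀ i, (cayleyMenger (sqDistMatrix x)).adjugate (some i) (some l) = c * v i := by
  let u : Option ι → ℝ := fun o ↦ o.elim (-∑ j, v j * ‖x j‖ ^ 2) v
  have hspan := (finrank_eq_one_iff_of_nonzero' (⟨v, hv⟩ : affineRelations ℝ x)
    fun h ↦ hl (congrFun (congrArg Subtype.val h) l)).1 hrank
  have hker (w : Option ι → ℝ) :
      (cayleyMenger (sqDistMatrix x)).mulVec w = 0 ↔ ∃ c : ℝ, c • u = w := by
    rw [cayleyMenger_sqDistMatrix_mulVec_eq_zero_iff]
    constructor
    · rintro ⟨hw, hnone⟩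
      obtain ⟨c, hc⟩ := hspan ⟨_, hw⟩
      have hci (i : ι) : c * v i = w (some i) := congrFun (congrArg Subtype.val hc) i
      refine ⟨c, funext fun o ↦ ?_⟩
      cases o with
      | none => simp [u, hnone, ← hci, Finset.mul_sum, mul_assoc]
      | some i => exact hci i
    · rintro ⟨c, rfl⟩
      exact ⟨Submodule.smul_mem _ c hv, by simp [u, Finset.mul_sum, mul_assoc]⟩
  obtain ⟨hdet, c, hc, hadj⟩ := exists_adjugate_col_eq_smul
    (isSymm_cayleyMenger (isSymm_sqDistMatrix x)) hker (l := some l) hl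
  exact ⟨hdet, c, hc, fun i ↦ hadj (some i)⟩

end DistanceMatrix

lemma sub_single_mem_affineRelations {k V ι : Type*} [Field k] [AddCommGroup V] [Module k V]
    [Fintype ι] [DecidableEq ι] {x : ι → V} {a : ι → k} {j : ι}
    (ha : ∑ i, a i • (x i - x j) = 0) : a - Pi.single j (∑ i, a i) ∈ affineRelations k x := by
  refine mem_affineRelations.2 ⟨by simp, ?_⟩
  rw [← ha]
  simp [sub_smul, smul_sub, Finset.sum_smul]

lemma exists_eq_mul_mul_of_isSymm {k ι : Type*} [Field k] {A : Matrix ι ι k} (hA : A.IsSymm)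
    {s u : ι → k} (hu : u ≠ 0) (h : ∀ i j, i ≠ j → A i j = s j * u i) :
    ∃ κ, ∀ i j, i ≠ j → A i j = κ * (u i * u j) := by
  obtain ⟨l, hl⟩ := Function.ne_iff.1 hu
  rw [Pi.zero_apply] at hl
  have hs (j : ι) : s j = s l / u l * u j := by
    obtain rfl | hj := eq_or_ne j l
    · rw [div_mul_cancel₀ _ hl]
    · have hsymm : s j * u l = s l * u j := by rw [← h l j hj.symm, ← h j l hj, hA.apply]
      field_simp
      exact hsymm
  exact ⟨s l / u l, fun i j hij ↦ by rw [h i j hij, hs j]; ring⟩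

lemma sqDistMatrix_eq_pairMatrix {n : ℕ} {V : Type*} [PseudoMetricSpace V] (x : Fin n → V) :
    sqDistMatrix x = pairMatrix fun p ↦ dist (x p.1.1) (x p.1.2) ^ 2 :=
  (pairMatrix_of_isSymm (isSymm_sqDistMatrix x) fun i ↦ by simp [sqDistMatrix]).symm

section Dziobek

variable {d n : ℕ} {c2 : ℤ} {m : Fin n → ℝ} {x : Fin n → EuclideanSpace ℝ (Fin d)}

lemma IsCentralConfig.sum_smul_sub_eq_zero (hx : IsCentralConfig c2 m (∑ i, m i) x)
    (hM : ∑ i, m i ≠ 0) (j : Fin n) :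
    ∑ i, (m i * (dist (x i) (x j) ^ c2 - 1)) • (x i - x j) = 0 := by
  have hj := hx j
  rw [smul_sub, smul_inv_smul₀ hM, Finset.sdiff_singleton_eq_erase,
    Finset.sum_erase Finset.univ (by simp)] at hj
  rw [← hj, Finset.sum_smul]
  simp only [mul_sub, mul_one, sub_smul, Finset.sum_sub_distrib, smul_sub]
  abel

theorem IsCentralConfig.exists_dist_zpow_eq (hx : IsCentralConfig c2 m (∑ i, m i) x)
    (hM : ∑ i, m i ≠ 0) (hm : ∀ i, m i ≠ 0)
    (hrank : Module.finrank ℝ (affineRelations ℝ x) = 1) {v : Fin n → ℝ}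
    (hv : v ∈ affineRelations ℝ x) (hv0 : v ≠ 0) :
    ∃ κ, ∀ i j, i ≠ j → dist (x i) (x j) ^ c2 = 1 + κ * (v i / m i * (v j / m j)) := by
  have hspan := (finrank_eq_one_iff_of_nonzero' (⟨v, hv⟩ : affineRelations ℝ x)
    fun h ↦ hv0 (congrArg Subtype.val h)).1 hrank
  choose s hs using fun j ↦
    hspan ⟨_, sub_single_mem_affineRelations (hx.sum_smul_sub_eq_zero hM j)⟩
  let A : Matrix (Fin n) (Fin n) ℝ := .of fun i j ↦ dist (x i) (x j) ^ c2 - 1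
  obtain ⟨κ, hκ⟩ := exists_eq_mul_mul_of_isSymm (A := A) (s := s) (u := v / m)
    (.ext fun i j ↦ by simp [A, dist_comm])
    (fun h ↦ hv0 (funext fun i ↦ by simpa [hm] using congrFun h i))
    fun i j hij ↦ by
      have hsij : s j * v i = m i * A i j := by
        simpa [A, hij] using congrFun (congrArg Subtype.val (hs j)) i
      rw [Pi.div_apply, ← mul_div_assoc, hsij, mul_div_cancel_left₀ _ (hm i)]
  exact ⟨κ, fun i j hij ↦ eq_add_of_sub_eq' (hκ i j hij)⟩

end Dziobek

lemma exists_dist_zpow_ne_one {n : ℕ} (hn : n ≠ 0) {V : Type*} [PseudoMetricSpace V]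
    {x : Fin n → V} {c2 : ℤ} (hc2 : c2 ≠ 0)
    (hdet : (cayleyMenger (sqDistMatrix x)).det = 0) :
    ∃ i j, i ≠ j ∧ dist (x i) (x j) ^ c2 ≠ 1 := by
  by_contra! h
  have hone (p : PairIdx n) : dist (x p.1.1) (x p.1.2) = 1 :=
    by_contra fun hne ↦ hc2 ((zpow_eq_one_iff_right₀ dist_nonneg hne).1 (h _ _ p.2.ne))
  rw [sqDistMatrix_eq_pairMatrix] at hdet
  simp only [hone, one_pow] at hdet
  exact det_cayleyMenger_pairMatrix_one_ne_zero hn hdet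

section DziobekParam

variable {k : Type*} [Field k] {n : ℕ} {S : Finset (Fin n)} {z m : Fin n → k} {w : k}

/-- The parameters of the Dziobek configuration whose ratios `z` vanish outside `S` and whose
masses outside `S` are given by `m`. -/
def dziobekParam (S : Finset (Fin n)) (z m : Fin n → k) (w : k) : Option (Fin n) → k
  | none => w
  | some i => if i ∈ S then z i else m i

lemma dziobekRatio_dziobekParam (hz : ∀ i ∉ S, z i = 0) :
    dziobekRatio S (dziobekParam S z m w) = z := by
  ext i
  by_cases hi : i ∈ S <;> simp [dziobekRatio, dziobekParam, hi, hz]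

lemma dziobekMass_dziobekParam {c s : k} {Y : PairIdx n → k} {l : Fin n} (hs : s ≠ 0)
    (hz : ∀ i, z i * m i = s * (cayleyMenger (pairMatrix Y)).adjugate (some i) (some l))
    (hw : w * (c * ∏ j ∈ S, z j) = s) (i : Fin n) :
    dziobekMass S c Y l (dziobekParam S z m w) i = m i := by
  by_cases hi : i ∈ S
  · have hprod : ∏ j ∈ S.erase i, dziobekParam S z m w (some j) = ∏ j ∈ S.erase i, z j :=
      Finset.prod_congr rfl fun j hj ↦ by simp [dziobekParam, Finset.mem_of_mem_erase hj]
    rw [dziobekMass, if_pos hi, hprod]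
    rw [← Finset.mul_prod_erase S z hi] at hw
    refine mul_left_cancel₀ hs ?_
    simp only [dziobekParam]
    linear_combination m i * hw - w * c * (∏ j ∈ S.erase i, z j) * hz i
  · simp [dziobekMass, dziobekParam, hi]

end DziobekParam

lemma exists_mem_dziobekFibre_of_dist_zpow_eq {n : ℕ} {V : Type*} [MetricSpace V] {x : Fin n → V}
    (hinj : Function.Injective x) {c2 : ℤ} (hc2 : c2 ≠ 0) {ε s : ℝ} {z m : Fin n → ℝ}
    {S : Finset (Fin n)} {l : Fin n} (hS : ∀ i, i ∈ S ↔ z i ≠ 0) (hs : s ≠ 0)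
    (hdist : ∀ i j, i ≠ j → dist (x i) (x j) ^ c2 = 1 + ε * (z i * z j))
    (hdet : (cayleyMenger (sqDistMatrix x)).det = 0)
    (hz : ∀ i, z i * m i = s * (cayleyMenger (sqDistMatrix x)).adjugate (some i) (some l))
    {c : (PairIdx n → ℝ) → ℝ} (hc : ∀ b, (∀ p, 0 < b p) → c b ≠ 0) :
    ∃ t ∈ dziobekFibre S ε c2 l c m,
      dziobekDist S ε c2 t = fun p ↦ dist (x p.1.1) (x p.1.2) := by
  let b (p : PairIdx n) := dist (x p.1.1) (x p.1.2) ^ c2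
  let t := dziobekParam S z m (s / (c b * ∏ j ∈ S, z j))
  have hpos (p : PairIdx n) : 0 < dist (x p.1.1) (x p.1.2) := dist_pos.2 (hinj.ne p.2.ne)
  have hb (p : PairIdx n) : 0 < b p := zpow_pos (hpos p) c2
  have hbase : dziobekBase S ε t = b := by
    ext p
    rw [dziobekBase, dziobekRatio_dziobekParam fun i hi ↦ not_not.1 (mt (hS i).2 hi)]
    exact (hdist _ _ p.2.ne).symm
  have hroot : dziobekDist S ε c2 t = fun p ↦ dist (x p.1.1) (x p.1.2) := by
    ext p
    rw [dziobekDist, hbase]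
    simp only [b]
    rw [← Real.rpow_intCast, ← Real.rpow_mul (hpos p).le,
      mul_inv_cancel₀ (Int.cast_ne_zero.2 hc2), Real.rpow_one]
  have hprod : ∏ j ∈ S, z j ≠ 0 := Finset.prod_ne_zero_iff.2 fun j hj ↦ (hS j).1 hj
  rw [sqDistMatrix_eq_pairMatrix] at hdet hz
  refine ⟨t, ⟨fun p ↦ hbase ▸ hb p, ?_, ?_⟩, hroot⟩ <;> rw [hroot]
  · exact hdet
  · rw [hbase]
    exact dziobekMass_dziobekParam hs hz (div_mul_cancel₀ _ (mul_ne_zero (hc b hb) hprod))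

theorem IsCentralConfig.exists_mem_dziobekFibre {d n : ℕ} {c2 : ℤ} (hc2 : c2 ≠ 0) {m : Fin n → ℝ}
    {x : Fin n → EuclideanSpace ℝ (Fin d)} (hx : IsCentralConfig c2 m (∑ i, m i) x)
    (hinj : Function.Injective x) (hM : ∑ i, m i ≠ 0) (hm : ∀ i, m i ≠ 0)
    (hrank : Module.finrank ℝ (affineRelations ℝ x) = 1) :
    ∃ (ε : ℤˣ) (S : Finset (Fin n)), S.Nonempty ∧ ∀ l ∈ S, ∀ c : (PairIdx n → ℝ) → ℝ,
      (∀ b, (∀ p, 0 < b p) → c b ≠ 0) → ∃ t ∈ dziobekFibre S ((ε : ℤ) : ℝ) c2 l c m,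
        dziobekDist S ((ε : ℤ) : ℝ) c2 t = fun p ↦ dist (x p.1.1) (x p.1.2) := by
  obtain ⟨⟨v, hv⟩, hv0, -⟩ := finrank_eq_one_iff'.1 hrank
  replace hv0 : v ≠ 0 := fun h ↦ hv0 (Subtype.ext h)
  obtain ⟨l, hl⟩ := Function.ne_iff.1 hv0
  have : Nonempty (Fin n) := ⟨l⟩
  have hadj {l : Fin n} (hl : v l ≠ 0) := exists_adjugate_cayleyMenger_sqDistMatrix_eq hrank hv hl
  obtain ⟨κ, hκ⟩ := hx.exists_dist_zpow_eq hM hm hrank hv hv0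
  have hκ0 : κ ≠ 0 := by
    rintro rfl
    obtain ⟨i, j, hij, hne⟩ := exists_dist_zpow_ne_one (Fin.pos l).ne' hc2 (hadj hl).1
    exact hne (by rw [hκ i j hij]; ring)
  obtain ⟨ε, hε⟩ : ∃ ε : ℤˣ, (ε : ℤ) * |κ| = κ := by
    obtain h | h := le_total 0 κ
    · exact ⟨1, by simp [abs_of_nonneg h]⟩
    · exact ⟨-1, by simp [abs_of_nonpos h]⟩
  have hs : √|κ| ≠ 0 := (Real.sqrt_pos.2 (abs_pos.2 hκ0)).ne'
  refine ⟨ε, ({i | v i ≠ 0} : Finset (Fin n)), ⟨l, by simpa using hl⟩, fun l hl c hc ↦ ?_⟩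
  obtain ⟨hdet, a, ha, hadj⟩ := hadj (Finset.mem_filter.1 hl).2
  refine exists_mem_dziobekFibre_of_dist_zpow_eq hinj hc2 (z := fun i ↦ √|κ| * (v i / m i))
    (s := √|κ| / a) (by simp [hs, hm]) (div_ne_zero hs ha) (fun i j hij ↦ ?_) hdet (fun i ↦ ?_) hc
  · rw [hκ i j hij]
    nth_rw 1 [← hε, ← Real.sq_sqrt (abs_nonneg κ)]
    ring
  · rw [hadj, div_mul_eq_mul_div, mul_div_assoc, mul_div_cancel_left₀ _ ha, mul_assoc,
      div_mul_cancel₀ _ (hm i)]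

section CCDistSet

variable {n : ℕ} {c2 : ℤ} {m : Fin n → ℝ}

lemma finrank_affineRelations_of_confDim {d : ℕ} {x : Fin n → EuclideanSpace ℝ (Fin d)}
    (hn : 2 ≤ n) (hdim : confDim x = n - 2) : Module.finrank ℝ (affineRelations ℝ x) = 1 := by
  have : Nonempty (Fin n) := ⟨⟨0, by lia⟩⟩
  have h := finrank_vectorSpan_add_finrank_affineRelations (k := ℝ) (x := x)
  rw [← direction_affineSpan, Fintype.card_fin] at h
  rw [confDim] at hdim
  omega

/-- The index of a family of Dziobek configurations: the sign of the coupling constant, and the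
support of the affine relation. -/
abbrev DziobekIdx (n : ℕ) := ℤˣ × {S : Finset (Fin n) // S.Nonempty}

lemma card_dziobekIdx_le (n : ℕ) : Fintype.card (DziobekIdx n) ≤ 2 * 2 ^ n := by
  rw [Fintype.card_prod, Fintype.card_units_int]
  gcongr
  exact (Fintype.card_subtype_le _).trans_eq (by simp)

theorem ccDistSet_subset_iUnion_dziobekFibre (hn : 2 ≤ n) (hc2 : c2 ≠ 0) (hM : ∑ i, m i ≠ 0)
    (hm : ∀ i, m i ≠ 0) {c : DziobekIdx n → (PairIdx n → ℝ) → ℝ}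
    (hc : ∀ τ b, (∀ p, 0 < b p) → c τ b ≠ 0) :
    ccDistSet n c2 m ⊆ ⋃ τ : DziobekIdx n, dziobekDist τ.2 ((τ.1 : ℤ) : ℝ) c2 ''
      dziobekFibre τ.2 ((τ.1 : ℤ) : ℝ) c2 τ.2.2.choose (c τ) m := by
  rintro r ⟨x, hinj, hx, hdim, hr⟩
  obtain ⟨ε, S, hS, hfibre⟩ := hx.exists_mem_dziobekFibre hc2 hinj hM hm
    (finrank_affineRelations_of_confDim hn hdim)
  obtain ⟨t, ht, hdist⟩ := hfibre hS.choose hS.choose_spec _ (hc (ε, ⟨S, hS⟩))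
  exact Set.mem_iUnion.2 ⟨(ε, ⟨S, hS⟩), t, ht, hdist.trans (funext hr).symm⟩

end CCDistSet

lemma encard_iUnion_le_card_mul {ι α : Type*} [Fintype ι] {s : ι → Set α} {N : ℕ}
    (hs : ∀ i, (s i).encard ≤ N) : (⋃ i, s i).encard ≤ (Fintype.card ι * N : ℕ) := by
  refine (Set.encard_iUnion_le_of_fintype s).trans ((Finset.sum_le_sum fun i _ ↦ hs i).trans ?_)
  simp

lemma exists_eval_ne_zero {R σ : Type*} [CommRing R] [IsDomain R] [Infinite R]
    {f : MvPolynomial σ R} (hf : f ≠ 0) : ∃ v, MvPolynomial.eval v f ≠ 0 := by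
  by_contra! h
  exact hf (MvPolynomial.funext fun v ↦ by simp [h v])

lemma two_mul_le_betaBound (n : ℕ) (c2 : ℤ) : 2 * n ≤ betaBound n c2 := by
  unfold betaBound; split_ifs <;> exact le_max_right _ _

lemma natAbs_le_betaBound (n : ℕ) (c2 : ℤ) : c2.natAbs ≤ betaBound n c2 := by
  unfold betaBound; split_ifs <;> lia

lemma two_mul_two_pow_mul_dziobekBound_le {n e β : ℕ} (hn : 3 ≤ n) (hnβ : 2 * n ≤ β) (heβ : e ≤ β) :
    2 * 2 ^ n * dziobekBound n e ≤ β * (2 * β - 1) ^ (n * (n - 1) / 2 + n) := by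
  have hpairs := card_pairIdx n ▸ le_card_pairIdx hn
  have hbase : 2 * (n * e + 4 * (n + 1) * (n - 1)) ≤ (2 * β - 1) ^ 2 := by
    zify [show 1 ≤ n by lia, show 1 ≤ 2 * β by lia]
    have h₁ : (2 * n * e : ℤ) ≤ β ^ 2 := by exact_mod_cast sq β ▸ Nat.mul_le_mul hnβ heβ
    have h₂ : ((2 * n) ^ 2 : ℤ) ≤ β ^ 2 := by exact_mod_cast Nat.pow_le_pow_left hnβ 2
    nlinarith [sq_nonneg ((β : ℤ) - 2)]
  calc 2 * 2 ^ n * dziobekBound n e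
      = 2 * n * (2 * (n * e + 4 * (n + 1) * (n - 1))) ^ n * e ^ (n * (n - 1) / 2 - n) := by
        rw [dziobekBound, card_pairIdx, mul_pow]; ring
    _ ≤ β * ((2 * β - 1) ^ 2) ^ n * (2 * β - 1) ^ (n * (n - 1) / 2 - n) := by
        gcongr; lia
    _ = β * (2 * β - 1) ^ (n * (n - 1) / 2 + n) := by
        rw [mul_assoc, ← pow_mul, ← pow_add]
        congr 2
        lia

theorem statement19_general {n : ℕ} (hn : 3 ≤ n) {c2 : ℤ} (hc2 : c2 ≠ 0) :
    ∃ B : Set (Fin n → ℝ),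
      (∃ T : Finset (MvPolynomial (Fin n) ℝ), (∀ p ∈ T, p ≠ 0) ∧
        B = {m | ∀ p ∈ T, MvPolynomial.eval m p = 0}) ∧
      B ≠ Set.univ ∧
      ∀ m : Fin n → ℝ, m ∉ B →
        (ccDistSet n c2 m).Finite ∧
        (ccDistSet n c2 m).ncard ≤
          betaBound n c2 * (2 * betaBound n c2 - 1) ^ (n * (n - 1) / 2 + n) := by
  choose c hc h hh hfibre using fun τ : DziobekIdx n ↦
    exists_ne_zero_encard_dziobekFibre_le τ.2 ((τ.1 : ℤ) : ℝ) (le_card_pairIdx hn) hc2 τ.2.2.choose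
  let f : MvPolynomial (Fin n) ℝ :=
    (∏ τ, h τ) * ((∏ i, MvPolynomial.X i) * ∑ i, MvPolynomial.X i)
  have hf : f ≠ 0 := by
    refine mul_ne_zero (Finset.prod_ne_zero_iff.2 fun τ _ ↦ hh τ) <|
      mul_ne_zero (Finset.prod_ne_zero_iff.2 fun i _ ↦ MvPolynomial.X_ne_zero i) fun hsum ↦ ?_
    have := congrArg (MvPolynomial.eval 1) hsum
    simp only [map_sum, MvPolynomial.eval_X, Pi.one_apply, Finset.sum_const, Finset.card_univ,
      Fintype.card_fin, nsmul_eq_mul, mul_one, map_zero, Nat.cast_eq_zero] at this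
    lia
  refine ⟨{m | MvPolynomial.eval m f = 0}, ⟨{f}, by simpa using hf, by simp⟩, ?_, fun m hm ↦ ?_⟩
  · obtain ⟨v, hv⟩ := exists_eval_ne_zero hf
    exact fun h ↦ hv (h ▸ Set.mem_univ v : v ∈ _)
  · simp only [f, Set.mem_ofPred_eq, map_mul, map_prod, map_sum, MvPolynomial.eval_X, mul_eq_zero,
      not_or, ← ne_eq, Finset.prod_ne_zero_iff, Finset.mem_univ, true_implies] at hm
    obtain ⟨hh, hprod, hM⟩ := hm
    rw [← Set.encard_le_coe_iff_finite_ncard_le]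
    refine (Set.encard_le_encard
      (ccDistSet_subset_iUnion_dziobekFibre (by lia) hc2 hM hprod hc)).trans <|
      (encard_iUnion_le_card_mul fun τ ↦
        (Set.encard_image_le _ _).trans (hfibre τ m (hh τ))).trans ?_
    exact_mod_cast (Nat.mul_le_mul_right _ (card_dziobekIdx_le n)).trans <|
      two_mul_two_pow_mul_dziobekBound_le hn (two_mul_le_betaBound n c2) (natAbs_le_betaBound n c2)

/-- Let `n ≥ 4`, let `a` be a nonzero semi-integer (`c2 = 2a`),
`q = n(n−1)/2`, and `β = max{−2a+2, 2n}` if `a < 0`, `β = max{2a, 2n}` if `a > 0`.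
Then there is a proper real algebraic subset `B ⊊ ℝ^n` such that for every mass vector
`m ∈ ℝ^n \ B` with all `m_i > 0`, the number of `(n−2)`-dimensional central
configurations with masses `m` for `U_a` up to symmetry — the number of their
mutual-distance vectors, normalized by `λ = M` — is at most `β(2β−1)^{q+n}`. -/
theorem statement19 {n : ℕ} (hn : 4 ≤ n) (c2 : ℤ) (hc2 : c2 ≠ 0) :
    ∃ B : Set (Fin n → ℝ),
      (∃ T : Finset (MvPolynomial (Fin n) ℝ), (∀ p ∈ T, p ≠ 0) ∧
        B = {m | ∀ p ∈ T, MvPolynomial.eval m p = 0}) ∧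
      B ≠ Set.univ ∧
      ∀ m : Fin n → ℝ, m ∉ B → (∀ i, 0 < m i) →
        (ccDistSet n c2 m).Finite ∧
        (ccDistSet n c2 m).ncard ≤
          betaBound n c2 * (2 * betaBound n c2 - 1) ^ (n * (n - 1) / 2 + n) := by
  obtain ⟨B, hB, hne, hcard⟩ := statement19_general (by lia : 3 ≤ n) hc2
  exact ⟨B, hB, hne, fun m hm _ ↦ hcard m hm⟩
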